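/- Let W(x) = x², fix ν > 0 and Λ = (0, L), so that λ_m^0(h) = 2(2m+1+ν)h. For each integer m ≥ 0 there exist constants C, δ > 0 such that for all h, L > 0 with h·L⁻² < δ: |λ_m^Λ(h) − 2(2m+1+ν)h − T(h,L)| ≤ C·(h·L⁻²)·T(h,L), where T(h,L) = [4/(m!·Γ(1+m+ν))]·h^{−2m−ν}·L^{2(2m+1+ν)}·e^{−L²/h}. -/

import Mathlib

open MeasureTheory Set Filter

/-- `w` generates an eigenfunction `u(x) = x^(1/2+ν)·w(x)` of the Dirichlet
realization `Q_Λ(ν;h) = h²D_x² + h²(ν²-1/4)x⁻² + W` on `Λ = (0,L)` with eigenvalue `lam`. -/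
def IsEigenfunctionQD (W : ℝ → ℝ) (ν L h lam : ℝ) (w : ℝ → ℝ) : Prop :=
  ContDiffOn ℝ 2 w (Set.Icc 0 L) ∧
  (∃ x ∈ Set.Ioc 0 L, x ^ ((1:ℝ)/2 + ν) * w x ≠ 0) ∧
  L ^ ((1:ℝ)/2 + ν) * w L = 0 ∧
  ∀ x ∈ Set.Ioo 0 L,
    -(h ^ 2) * deriv (deriv (fun y : ℝ => y ^ ((1:ℝ)/2 + ν) * w y)) x
      + h ^ 2 * (ν ^ 2 - 1/4) * (x ^ 2)⁻¹ * (x ^ ((1:ℝ)/2 + ν) * w x)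
      + W x * (x ^ ((1:ℝ)/2 + ν) * w x)
      = lam * (x ^ ((1:ℝ)/2 + ν) * w x)

/-- `lam` is an eigenvalue of `Q_Λ(ν;h)`. -/
def IsEigQD (W : ℝ → ℝ) (ν L h lam : ℝ) : Prop :=
  ∃ w : ℝ → ℝ, IsEigenfunctionQD W ν L h lam w

/-- `lam` is the `m`-th element of `S` in increasing order (counting from `m = 0`). -/
def IsNthEig (S : Set ℝ) (m : ℕ) (lam : ℝ) : Prop :=
  lam ∈ S ∧ {x ∈ S | x < lam}.Finite ∧ {x ∈ S | x < lam}.ncard = m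

/-- rising factorial -/
noncomputable def poch (x : ℝ) (n : ℕ) : ℝ := ∏ i ∈ Finset.range n, (x + i)

lemma poch_zero (x : ℝ) : poch x 0 = 1 := by simp [poch]
lemma poch_succ (x : ℝ) (n : ℕ) : poch x (n+1) = poch x n * (x + n) := by
  simp [poch, Finset.prod_range_succ]
lemma poch_succ' (x : ℝ) (n : ℕ) : poch x (n+1) = x * poch (x+1) n := by
  simp only [poch, Finset.prod_range_succ', Nat.cast_zero, add_zero, mul_comm]
  congr 1
  apply Finset.prod_congr rfl; intro i _; push_cast; ring
lemma poch_add (x : ℝ) (m n : ℕ) : poch x (m+n) = poch x m * poch (x+m) n := by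
  simp only [poch, Finset.prod_range_add]
  congr 1
  apply Finset.prod_congr rfl; intro i _; push_cast; ring
lemma poch_pos {x : ℝ} (hx : 0 < x) (n : ℕ) : 0 < poch x n :=
  Finset.prod_pos fun i _ => by positivity
lemma poch_one (n : ℕ) : poch 1 n = n.factorial := by
  induction n with
  | zero => simp [poch_zero]
  | succ n ih => rw [poch_succ, ih, Nat.factorial_succ]; push_cast; ring
lemma poch_mono {x y : ℝ} (hx : 0 ≤ x) (hxy : x ≤ y) (n : ℕ) : poch x n ≤ poch y n :=
  Finset.prod_le_prod (fun i _ => by positivity) (fun i _ => by linarith)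
lemma poch_neg (e : ℝ) (k : ℕ) : poch (-(k+e)) k = (-1)^k * poch (1+e) k := by
  simp only [poch]
  have h1 : ((-1:ℝ))^k = ∏ i ∈ Finset.range k, (-1:ℝ) := by simp
  rw [← Finset.prod_range_reflect, h1, ← Finset.prod_mul_distrib]
  apply Finset.prod_congr rfl
  intro i hi
  have := Finset.mem_range.1 hi
  rw [show k - 1 - i = k - (1 + i) by omega, Nat.cast_sub (by omega)]
  push_cast; ring
lemma poch_neg_succ (e : ℝ) (k : ℕ) : poch (-(k+e)) (k+1) = -((-1)^k * (e * poch (1+e) k)) := by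
  rw [poch_succ, poch_neg]; ring
lemma fact_le_poch {b : ℝ} (hb : 1 ≤ b) (n : ℕ) : (n.factorial : ℝ) ≤ poch b n := by
  rw [← poch_one]; exact poch_mono zero_le_one hb n
lemma Gamma_poch {b : ℝ} (hb : 0 < b) (n : ℕ) : Real.Gamma (b + n) = Real.Gamma b * poch b n := by
  induction n with
  | zero => simp [poch_zero]
  | succ n ih =>
    rw [poch_succ, show b + ((n+1 : ℕ):ℝ) = (b+n) + 1 by push_cast; ring, Real.Gamma_add_one (by positivity), ih]; ring
lemma continuous_poch (n : ℕ) : Continuous (fun x => poch x n) := by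
  unfold poch; fun_prop
lemma contDiff_poch (n : ℕ) : ContDiff ℝ 1 (fun x => poch x n) := by
  unfold poch; fun_prop

/-- Coefficient sequences with infinite radius of convergence. -/
def Ent (c : ℕ → ℝ) : Prop := ∀ r : ℝ, Summable fun n => |c n| * r ^ n

noncomputable def psum (c : ℕ → ℝ) (z : ℝ) : ℝ := ∑' n, c n * z ^ n

lemma Ent.summable {c : ℕ → ℝ} (hc : Ent c) (z : ℝ) : Summable fun n => c n * z ^ n := by
  apply Summable.of_norm
  simpa [abs_mul] using hc |z|

lemma Ent.deriv {c : ℕ → ℝ} (hc : Ent c) : Ent (fun n => (n+1) * c (n+1)) := by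
  intro r
  have h := (summable_nat_add_iff 1).2 (hc (2 * (|r| + 1)))
  apply Summable.of_norm_bounded h
  intro n
  have h1 : ((n:ℝ)+1) ≤ 2^(n+1) := by
    exact_mod_cast (Nat.lt_two_pow_self (n := n+1)).le
  have h2 : |r|^n ≤ (|r|+1)^(n+1) := by
    calc |r|^n ≤ (|r|+1)^n := by gcongr; linarith
      _ ≤ _ := pow_le_pow_right₀ (by linarith [abs_nonneg r]) (by omega)
  simp only [norm_mul, Real.norm_eq_abs, abs_abs, abs_mul, abs_pow]
  rw [abs_of_nonneg (by positivity : (0:ℝ) ≤ (n:ℝ)+1), mul_pow]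
  calc ((n:ℝ)+1) * |c (n+1)| * |r|^n ≤ 2^(n+1) * |c (n+1)| * (|r|+1)^(n+1) := by gcongr
    _ = _ := by ring

lemma Ent.hasDerivAt {c : ℕ → ℝ} (hc : Ent c) (z : ℝ) :
    HasDerivAt (psum c) (psum (fun n => (n+1) * c (n+1)) z) z := by
  have hz : |z| < |z| + 1 := by linarith
  have hu : Summable fun n : ℕ => |(n:ℝ) * c n| * (|z|+1)^(n-1) := by
    rw [← summable_nat_add_iff 1]
    simpa using hc.deriv (|z|+1)
  have key := hasDerivAt_tsum_of_isPreconnected (g := fun n z => c n * z^n) (g' := fun n z => (n * c n) * z^(n-1)) hu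
    (t := Ioo (-(|z|+1)) (|z|+1)) isOpen_Ioo isPreconnected_Ioo
    (fun n y _ => by
      have := (hasDerivAt_pow n y).const_mul (c n)
      exact this.congr_deriv (by show _ = (n:ℝ) * c n * y^(n-1); ring))
    (fun n y hy => by
      simp only [norm_mul, norm_pow, Real.norm_eq_abs, abs_mul]
      apply mul_le_mul_of_nonneg_left _ (by positivity)
      apply pow_le_pow_left₀ (abs_nonneg _)
      exact (abs_lt.2 hy).le)
    (y₀ := 0) (by constructor <;> linarith [abs_nonneg z]) (hc.summable 0)
    (y := z) (abs_lt.1 hz)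
  have h2 : (∑' n : ℕ, ((n:ℝ) * c n) * z^(n-1)) = psum (fun n => (n+1) * c (n+1)) z := by
    have hs : Summable fun n:ℕ => ((n:ℝ) * c n) * z^(n-1) := by
      rw [← summable_nat_add_iff 1]
      simpa using hc.deriv.summable z
    rw [hs.tsum_eq_zero_add]
    simp [psum]
  rw [← h2]; exact key

noncomputable def kc (a b : ℝ) (n : ℕ) : ℝ := poch a n / (poch b n * n.factorial)

lemma kc_succ {a b : ℝ} (hb : 0 < b) (n : ℕ) : (n+1) * (b+n) * kc a b (n+1) = (a+n) * kc a b n := by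
  have := poch_pos hb n
  have h2 := poch_pos hb (n+1)
  unfold kc
  rw [poch_succ, poch_succ, Nat.factorial_succ]
  push_cast
  field_simp

lemma ent_kc (a : ℝ) {b : ℝ} (hb : 0 < b) : Ent (kc a b) := by
  intro r
  obtain ⟨N, hN⟩ := exists_nat_gt (2 * |r| * (|a|+1))
  apply summable_of_ratio_norm_eventually_le (r := 1/2) (by norm_num)
  filter_upwards [eventually_ge_atTop N, eventually_ge_atTop 1] with n hn hn1
  have hn' : (N:ℝ) ≤ n := by exact_mod_cast hn
  have hn1' : (1:ℝ) ≤ n := by exact_mod_cast hn1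
  have h1 : |kc a b (n+1)| * ((n+1)*(b+n)) = |a+n| * |kc a b n| := by
    rw [← abs_mul, ← kc_succ hb, abs_mul, abs_of_pos (by positivity : (0:ℝ) < (n+1)*(b+n))]; ring
  have h2 : |a + n| ≤ (|a|+1) * (n+1) := by
    calc |a + n| ≤ |a| + |(n:ℝ)| := abs_add_le _ _
      _ = |a| + n := by rw [Nat.abs_cast]
      _ ≤ _ := by nlinarith [abs_nonneg a]
  simp only [norm_mul, Real.norm_eq_abs, abs_abs, norm_pow, pow_succ]
  have h3 : |kc a b (n+1)| * (b+n) ≤ (|a|+1) * |kc a b n| := by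
    have : |kc a b (n+1)| * (b+n) * (n+1) ≤ (|a|+1) * |kc a b n| * (n+1) := by
      calc _ = |kc a b (n+1)| * ((n+1)*(b+n)) := by ring
        _ = _ := h1
        _ ≤ (|a|+1) * (n+1) * |kc a b n| := by gcongr
        _ = _ := by ring
    exact le_of_mul_le_mul_right this (by positivity)
  have h4 : |kc a b (n+1)| * |r| ≤ 1/2 * |kc a b n| := by
    have h5 : 2 * |r| * (|a|+1) ≤ b + n := by linarith
    have : (|kc a b (n+1)| * |r|) * (2 * (|a|+1)) ≤ (1/2 * |kc a b n|) * (2 * (|a|+1)) := by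
      calc _ = |kc a b (n+1)| * (2 * |r| * (|a|+1)) := by ring
        _ ≤ |kc a b (n+1)| * (b+n) := by gcongr
        _ ≤ _ := h3
        _ = _ := by ring
    exact le_of_mul_le_mul_right this (by positivity)
  calc _ = (|kc a b (n+1)| * |r|) * |r|^n := by ring
    _ ≤ (1/2 * |kc a b n|) * |r|^n := by gcongr
    _ = _ := by ring

/-- Kummer function -/
noncomputable def KM (a b z : ℝ) : ℝ := psum (kc a b) z
noncomputable def KM1 (a b z : ℝ) : ℝ := psum (fun n => (n+1) * kc a b (n+1)) z
noncomputable def KM2 (a b z : ℝ) : ℝ := psum (fun n => (n+1) * (((n+1:ℕ):ℝ)+1) * kc a b (n+1+1)) z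

lemma KM_hasDerivAt (a : ℝ) {b : ℝ} (hb : 0 < b) (z : ℝ) : HasDerivAt (KM a b) (KM1 a b z) z :=
  (ent_kc a hb).hasDerivAt z
lemma KM1_hasDerivAt (a : ℝ) {b : ℝ} (hb : 0 < b) (z : ℝ) : HasDerivAt (KM1 a b) (KM2 a b z) z := by
  have := (ent_kc a hb).deriv.hasDerivAt z
  unfold KM1 KM2
  convert this using 3
  ring
lemma KM2_continuous (a : ℝ) {b : ℝ} (hb : 0 < b) : Continuous (KM2 a b) := by
  have : KM2 a b = psum (fun n => (n+1) * (((n+1:ℕ):ℝ)+1) * kc a b (n+1+1)) := rfl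
  rw [this]
  have h := (ent_kc a hb).deriv.deriv
  refine continuous_iff_continuousAt.2 fun z => ?_
  have := (h.hasDerivAt z).continuousAt
  convert this using 3
  ring
lemma KM_ode (a : ℝ) {b : ℝ} (hb : 0 < b) (z : ℝ) :
    z * KM2 a b z + (b - z) * KM1 a b z - a * KM a b z = 0 := by
  have h0 := (ent_kc a hb).summable z
  have h1 := (ent_kc a hb).deriv.summable z
  have h2 : Summable fun n : ℕ => ((n+1) * (((n+1:ℕ):ℝ)+1) * kc a b (n+1+1)) * z^n := by
    have := (ent_kc a hb).deriv.deriv.summable z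
    convert this using 3
    ring
  have e1 : z * KM1 a b z = ∑' n : ℕ, (n : ℝ) * kc a b n * z^n := by
    have hs : Summable fun n : ℕ => (n : ℝ) * kc a b n * z^n := by
      rw [← summable_nat_add_iff 1]
      refine (h1.mul_left z).congr fun n => ?_
      push_cast; ring
    rw [hs.tsum_eq_zero_add, KM1, psum, ← tsum_mul_left]
    simp only [Nat.cast_zero, zero_mul, zero_add]
    apply tsum_congr; intro n; push_cast; ring
  have hs1 : Summable fun n : ℕ => (n : ℝ) * kc a b n * z^n := by
    rw [← summable_nat_add_iff 1]
    refine (h1.mul_left z).congr fun n => ?_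
    push_cast; ring
  have hs2 : Summable fun n : ℕ => (n : ℝ) * (n+1) * kc a b (n+1) * z^n := by
    rw [← summable_nat_add_iff 1]
    refine (h2.mul_left z).congr fun n => ?_
    push_cast; ring
  have e2 : z * KM2 a b z = ∑' n : ℕ, (n : ℝ) * (n+1) * kc a b (n+1) * z^n := by
    rw [hs2.tsum_eq_zero_add, KM2, psum, ← tsum_mul_left]
    simp only [Nat.cast_zero, zero_mul, zero_add]
    apply tsum_congr; intro n; push_cast; ring
  have e3 : b * KM1 a b z = ∑' n : ℕ, b * (((n:ℝ)+1) * kc a b (n+1) * z^n) := by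
    rw [tsum_mul_left]; rfl
  have e4 : a * KM a b z = ∑' n : ℕ, a * (kc a b n * z^n) := by
    rw [tsum_mul_left]; rfl
  have e5 : z * KM2 a b z + b * KM1 a b z = z * KM1 a b z + a * KM a b z := by
    rw [e1, e2, e3, e4, ← hs2.tsum_add (h1.mul_left b), ← hs1.tsum_add (h0.mul_left a)]
    apply tsum_congr; intro n
    have := kc_succ (a := a) hb n
    linear_combination z^n * this
  linarith

lemma KM_pos {a b z : ℝ} (ha : 0 ≤ a) (hb : 0 < b) (hz : 0 ≤ z) : 0 < KM a b z := by
  have h0 := (ent_kc a hb).summable z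
  have hp : ∀ n, 0 ≤ kc a b n := fun n => by
    unfold kc
    have := poch_pos hb n
    have : 0 ≤ poch a n := Finset.prod_nonneg fun i _ => by positivity
    positivity
  have := h0.sum_le_tsum (Finset.range 1) (fun n _ => mul_nonneg (hp n) (pow_nonneg hz n))
  simp [kc, poch_zero] at this
  exact lt_of_lt_of_le one_pos this
lemma KM_zero (a b : ℝ) : KM a b 0 = 1 := by
  unfold KM psum
  rw [tsum_eq_single 0]
  · simp [kc, poch_zero]
  · intro n hn; simp [hn]

lemma dd_calc {w w1 w2 : ℝ → ℝ} {L ν x : ℝ} 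
    (hd : ∀ y ∈ Ioo 0 L, HasDerivAt w (w1 y) y) (hd2 : ∀ y ∈ Ioo 0 L, HasDerivAt w1 (w2 y) y)
    (hx : x ∈ Ioo 0 L) :
    deriv (deriv (fun y : ℝ => y ^ ((1:ℝ)/2 + ν) * w y)) x =
      x ^ ((1:ℝ)/2 + ν) * (w2 x + (1+2*ν)/x * w1 x + (ν^2-1/4) * (x^2)⁻¹ * w x) := by
  have h1 : ∀ y ∈ Ioo 0 L, HasDerivAt (fun y : ℝ => y ^ ((1:ℝ)/2 + ν) * w y)
      (((1:ℝ)/2+ν) * y ^ ((1:ℝ)/2 + ν - 1) * w y + y ^ ((1:ℝ)/2 + ν) * w1 y) y := fun y hy =>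
    (Real.hasDerivAt_rpow_const (Or.inl hy.1.ne')).mul (hd y hy)
  have h2 : deriv (fun y : ℝ => y ^ ((1:ℝ)/2 + ν) * w y) =ᶠ[nhds x]
      fun y => (((1:ℝ)/2+ν) * y ^ ((1:ℝ)/2 + ν - 1) * w y + y ^ ((1:ℝ)/2 + ν) * w1 y) := by
    filter_upwards [isOpen_Ioo.mem_nhds hx] with y hy using (h1 y hy).deriv
  rw [h2.deriv_eq]
  have hx0 : x ≠ 0 := hx.1.ne'
  have h3 := (((Real.hasDerivAt_rpow_const (x := x) (p := (1:ℝ)/2 + ν - 1) (Or.inl hx0)).const_mul ((1:ℝ)/2+ν)).mul (hd x hx)).add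
    ((Real.hasDerivAt_rpow_const (x := x) (p := (1:ℝ)/2 + ν) (Or.inl hx0)).mul (hd2 x hx))
  refine h3.deriv.trans ?_
  rw [Real.rpow_sub_one hx0, Real.rpow_sub_one hx0]
  field_simp
  ring

/-- solution data for the reduced equation -/
structure Sol (ν L h lam : ℝ) (w w1 w2 : ℝ → ℝ) : Prop where
  c0 : ContinuousOn w (Icc 0 L)
  c1 : ContinuousOn w1 (Icc 0 L)
  d1 : ∀ y ∈ Ioo 0 L, HasDerivAt w (w1 y) y
  d2 : ∀ y ∈ Ioo 0 L, HasDerivAt w1 (w2 y) y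
  eq : ∀ y ∈ Ioo 0 L, h^2 * (w2 y + (1+2*ν)/y * w1 y) = (y^2 - lam) * w y

lemma eq_iff {ν L h lam x : ℝ} {w w1 w2 : ℝ → ℝ} 
    (hd : ∀ y ∈ Ioo 0 L, HasDerivAt w (w1 y) y) (hd2 : ∀ y ∈ Ioo 0 L, HasDerivAt w1 (w2 y) y)
    (hx : x ∈ Ioo 0 L) :
    (-(h ^ 2) * deriv (deriv (fun y : ℝ => y ^ ((1:ℝ)/2 + ν) * w y)) x
      + h ^ 2 * (ν ^ 2 - 1/4) * (x ^ 2)⁻¹ * (x ^ ((1:ℝ)/2 + ν) * w x)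
      + x ^ 2 * (x ^ ((1:ℝ)/2 + ν) * w x)
      = lam * (x ^ ((1:ℝ)/2 + ν) * w x)) ↔ h^2 * (w2 x + (1+2*ν)/x * w1 x) = (x^2 - lam) * w x := by
  rw [dd_calc hd hd2 hx]
  have hp : (0:ℝ) < x ^ ((1:ℝ)/2 + ν) := Real.rpow_pos_of_pos hx.1 _
  set p := x ^ ((1:ℝ)/2 + ν)
  constructor
  · intro H
    apply mul_left_cancel₀ hp.ne'
    linear_combination -H
  · intro H
    linear_combination -p * H

lemma sol_of_eig {ν L h lam : ℝ} (hL : 0 < L) {w : ℝ → ℝ}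
    (H : IsEigenfunctionQD (fun x => x^2) ν L h lam w) :
    Sol ν L h lam w (derivWithin w (Icc 0 L)) (deriv (deriv w)) := by
  obtain ⟨hw, -, -, heq⟩ := H
  have hU : UniqueDiffOn ℝ (Icc 0 L) := uniqueDiffOn_Icc hL
  have hwo : ContDiffOn ℝ 2 w (Ioo 0 L) := hw.mono Ioo_subset_Icc_self
  have hnh : ∀ y ∈ Ioo 0 L, Icc 0 L ∈ nhds y := fun y hy => Icc_mem_nhds hy.1 hy.2
  have e1 : ∀ y ∈ Ioo 0 L, derivWithin w (Icc 0 L) y = deriv w y := fun y hy =>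
    derivWithin_of_mem_nhds (hnh y hy)
  have d1 : ∀ y ∈ Ioo 0 L, HasDerivAt w (derivWithin w (Icc 0 L) y) y := fun y hy => by
    rw [e1 y hy]
    exact ((hwo.contDiffAt (isOpen_Ioo.mem_nhds hy)).differentiableAt (by norm_num)).hasDerivAt
  have d2 : ∀ y ∈ Ioo 0 L, HasDerivAt (derivWithin w (Icc 0 L)) (deriv (deriv w) y) y := fun y hy => by
    have h1 : ContDiffOn ℝ 1 (deriv w) (Ioo 0 L) := hwo.deriv_of_isOpen isOpen_Ioo (by norm_num)
    have h2 := ((h1.contDiffAt (isOpen_Ioo.mem_nhds hy)).differentiableAt (by norm_num)).hasDerivAt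
    apply h2.congr_of_eventuallyEq
    filter_upwards [isOpen_Ioo.mem_nhds hy] with t ht using e1 t ht
  exact ⟨hw.continuousOn, hw.continuousOn_derivWithin hU (by norm_num), d1, d2,
    fun y hy => (eq_iff d1 d2 hy).1 (heq y hy)⟩

lemma sol_wronskian {ν L h lam : ℝ} (hν : 0 < ν) (hh : 0 < h) (hL : 0 < L) {w w1 w2 v v1 v2 : ℝ → ℝ}
    (S : Sol ν L h lam w w1 w2) (T : Sol ν L h lam v v1 v2) : w L * v1 L - w1 L * v L = 0 := by
  have hp : 0 < 1 + 2*ν := by linarith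
  have hc : ContinuousOn (fun x => x^(1+2*ν) * (w x * v1 x - w1 x * v x)) (Icc 0 L) := by
    apply ContinuousOn.mul
    · exact (Real.continuous_rpow_const hp.le).continuousOn
    · exact (S.c0.mul T.c1).sub (S.c1.mul T.c0)
  obtain ⟨c, hcm, hc2⟩ := exists_hasDerivAt_eq_slope (fun x => x^(1+2*ν) * (w x * v1 x - w1 x * v x))
    (fun _ => 0) hL hc (fun x hx => by
      have hx0 : x ≠ 0 := hx.1.ne'
      have := (Real.hasDerivAt_rpow_const (x := x) (p := 1+2*ν) (Or.inl hx0)).mul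
        (((S.d1 x hx).mul (T.d2 x hx)).sub ((S.d2 x hx).mul (T.d1 x hx)))
      refine this.congr_deriv ?_
      simp only [Pi.sub_apply, Pi.mul_apply]
      rw [Real.rpow_sub_one hx0]
      have e1 := S.eq x hx
      have e2 := T.eq x hx
      have hh2 : h^2 ≠ 0 := by positivity
      have f1 : w2 x = (x^2-lam)/h^2 * w x - (1+2*ν)/x * w1 x := by
        field_simp at e1 ⊢
        linear_combination e1
      have f2 : v2 x = (x^2-lam)/h^2 * v x - (1+2*ν)/x * v1 x := by
        field_simp at e2 ⊢
        linear_combination e2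
      rw [f1, f2]
      field_simp
      ring)
  simp only [Real.zero_rpow hp.ne', zero_mul, sub_zero] at hc2
  have hLp : (0:ℝ) < L^(1+2*ν) := Real.rpow_pos_of_pos hL _
  have := hc2.symm
  rw [div_eq_zero_iff] at this
  rcases this with h1 | h1
  · rcases mul_eq_zero.1 h1 with h2 | h2
    · exact absurd h2 hLp.ne'
    · exact h2
  · exact absurd h1 hL.ne'

lemma sol_unique {ν L h lam : ℝ} (hν : 0 < ν) (hh : 0 < h) {w w1 w2 : ℝ → ℝ}
    (S : Sol ν L h lam w w1 w2) (h0 : w L = 0) (h1 : w1 L = 0) {x : ℝ} (hx : x ∈ Ioc 0 L) : w x = 0 := by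
  obtain ⟨q, hq0, hq⟩ : ∃ q : ℝ, 0 ≤ q ∧ ∀ y ∈ Ioo x L, |(y^2-lam)/h^2| ≤ q := by
    refine ⟨(L^2 + |lam|)/h^2, by positivity, fun y hy => ?_⟩
    rw [abs_div, abs_of_pos (by positivity : 0 < h^2)]
    gcongr
    calc |y^2 - lam| ≤ |y^2| + |lam| := abs_sub _ _
      _ ≤ _ := by
        rw [abs_of_nonneg (sq_nonneg y)]
        have : y ≤ L := hy.2.le
        have : 0 < y := hx.1.trans hy.1
        gcongr
  set K := 1 + q + 2*((1+2*ν)/x) with hK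
  have hsub : Icc x L ⊆ Icc 0 L := Icc_subset_Icc_left hx.1.le
  have hmono : MonotoneOn (fun y => ((w y)^2 + (w1 y)^2) * Real.exp (K*y)) (Icc x L) := by
    apply monotoneOn_of_hasDerivWithinAt_nonneg (convex_Icc _ _)
      (f' := fun y => (2 * w y * w1 y + 2 * w1 y * w2 y) * Real.exp (K*y) + ((w y)^2 + (w1 y)^2) * (Real.exp (K*y) * K))
    · exact (((S.c0.mono hsub).pow 2).add ((S.c1.mono hsub).pow 2)).mul (by fun_prop)
    · intro y hy
      rw [interior_Icc] at hy
      have hy' : y ∈ Ioo 0 L := ⟨hx.1.trans hy.1, hy.2⟩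
      have := ((((S.d1 y hy').pow 2).add ((S.d2 y hy').pow 2)).mul (((hasDerivAt_id y).const_mul K).exp))
      refine (this.congr_deriv ?_).hasDerivWithinAt
      simp
    · intro y hy
      rw [interior_Icc] at hy
      have hy' : y ∈ Ioo 0 L := ⟨hx.1.trans hy.1, hy.2⟩
      have e := S.eq y hy'
      have hqy := hq y hy
      have e2 : w2 y = (y^2-lam)/h^2 * w y - (1+2*ν)/y * w1 y := by
        have : h^2 ≠ 0 := by positivity
        field_simp at e ⊢
        linear_combination e
      have e3 : (1+2*ν)/y ≤ (1+2*ν)/x := by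
        have := hx.1
        have := hy.1.le
        gcongr
      have e4 : 0 ≤ (1+2*ν)/y := by have := hy'.1; positivity
      generalize (1+2*ν)/y = r at *
      generalize (1+2*ν)/x = R at *
      generalize (y^2-lam)/h^2 = t at *
      have key : 0 ≤ (2 * w y * w1 y + 2 * w1 y * w2 y) + ((w y)^2 + (w1 y)^2) * K := by
        rw [e2, hK]
        have a1 := abs_le.1 hqy
        have a2 : 0 ≤ (q + t) * (w y + w1 y)^2 := mul_nonneg (by linarith) (sq_nonneg _)
        have a3 : 0 ≤ (q - t) * (w y - w1 y)^2 := mul_nonneg (by linarith) (sq_nonneg _)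
        have a4 : 0 ≤ (R - r) * (w1 y)^2 := mul_nonneg (by linarith) (sq_nonneg _)
        have a5 : 0 ≤ R * (w y)^2 := mul_nonneg (by linarith) (sq_nonneg _)
        nlinarith [sq_nonneg (w y + w1 y)]
      have := mul_nonneg key (Real.exp_pos (K*y)).le
      linarith
  have := hmono ⟨le_rfl, hx.2⟩ ⟨hx.2, le_rfl⟩ hx.2
  simp only [h0, h1] at this
  have h2 : (w x)^2 + (w1 x)^2 ≤ 0 := by
    by_contra hcon
    push Not at hcon
    have := mul_pos hcon (Real.exp_pos (K*x))
    linarith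
  nlinarith [sq_nonneg (w x), sq_nonneg (w1 x)]

noncomputable def kw (a b h x : ℝ) : ℝ := Real.exp (-(x^2/h)/2) * KM a b (x^2/h)
noncomputable def kw1 (a b h x : ℝ) : ℝ := (2*x/h) * (Real.exp (-(x^2/h)/2) * (KM1 a b (x^2/h) - KM a b (x^2/h)/2))
noncomputable def kw2 (a b h x : ℝ) : ℝ := (2/h) * (Real.exp (-(x^2/h)/2) * (KM1 a b (x^2/h) - KM a b (x^2/h)/2))
  + (2*x/h)^2 * (Real.exp (-(x^2/h)/2) * (KM2 a b (x^2/h) - KM1 a b (x^2/h) + KM a b (x^2/h)/4))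

lemma hz_deriv (h x : ℝ) : HasDerivAt (fun x : ℝ => x^2/h) (2*x/h) x := by
  have := (hasDerivAt_pow 2 x).div_const h
  simpa using this
lemma kw_d {a b h : ℝ} (hb : 0 < b) (x : ℝ) : HasDerivAt (kw a b h) (kw1 a b h x) x := by
  have h1 := ((hz_deriv h x).neg.div_const 2).exp.mul ((KM_hasDerivAt a hb (x^2/h)).comp x (hz_deriv h x))
  refine h1.congr_deriv ?_
  simp only [kw1, Function.comp, Pi.neg_apply]; ring
lemma kw1_d {a b h : ℝ} (hb : 0 < b) (x : ℝ) : HasDerivAt (kw1 a b h) (kw2 a b h x) x := by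
  have h1 := (((hasDerivAt_id x).const_mul 2).div_const h).mul (((hz_deriv h x).neg.div_const 2).exp.mul
    (((KM1_hasDerivAt a hb (x^2/h)).comp x (hz_deriv h x)).sub (((KM_hasDerivAt a hb (x^2/h)).comp x (hz_deriv h x)).div_const 2)))
  refine h1.congr_deriv ?_
  simp only [kw2, Function.comp, Pi.mul_apply, Pi.sub_apply, Pi.neg_apply, id]; ring
lemma kw2_c {a b h : ℝ} (hb : 0 < b) : Continuous (kw2 a b h) := by
  have c0 : Continuous (KM a b) := continuous_iff_continuousAt.2 fun z => (KM_hasDerivAt a hb z).continuousAt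
  have c1 : Continuous (KM1 a b) := continuous_iff_continuousAt.2 fun z => (KM1_hasDerivAt a hb z).continuousAt
  have c2 := KM2_continuous a hb
  unfold kw2
  fun_prop
lemma kw_contDiff {a b h : ℝ} (hb : 0 < b) : ContDiff ℝ 2 (kw a b h) := by
  have e1 : deriv (kw a b h) = kw1 a b h := funext fun x => (kw_d hb x).deriv
  have e2 : deriv (kw1 a b h) = kw2 a b h := funext fun x => (kw1_d hb x).deriv
  rw [show (2 : WithTop ℕ∞) = 1 + 1 from by norm_num, contDiff_succ_iff_deriv]
  refine ⟨fun x => (kw_d hb x).differentiableAt, by simp, ?_⟩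
  rw [e1, contDiff_one_iff_deriv, e2]
  exact ⟨fun x => (kw1_d hb x).differentiableAt, kw2_c hb⟩

lemma kw_sol {ν L h lam : ℝ} (hν : 0 < ν) (hh : 0 < h) :
    Sol ν L h lam (kw ((1+ν)/2 - lam/(4*h)) (1+ν) h) (kw1 ((1+ν)/2 - lam/(4*h)) (1+ν) h)
      (kw2 ((1+ν)/2 - lam/(4*h)) (1+ν) h) := by
  have hb : 0 < 1 + ν := by linarith
  refine ⟨fun x _ => (kw_d hb x).continuousAt.continuousWithinAt, fun x _ => (kw1_d hb x).continuousAt.continuousWithinAt,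
    fun x _ => kw_d hb x, fun x _ => kw1_d hb x, fun x hx => ?_⟩
  have hx0 : x ≠ 0 := hx.1.ne'
  have := KM_ode ((1+ν)/2 - lam/(4*h)) hb (x^2/h)
  unfold kw kw1 kw2
  generalize KM2 _ _ _ = M2 at *
  generalize KM1 _ _ _ = M1 at *
  generalize KM _ _ _ = M0 at *
  generalize Real.exp _ = E at *
  field_simp at this ⊢
  linear_combination 2 * E * this

lemma eig_iff {ν L h lam : ℝ} (hν : 0 < ν) (hh : 0 < h) (hL : 0 < L) :
    IsEigQD (fun x => x^2) ν L h lam ↔ KM ((1+ν)/2 - lam/(4*h)) (1+ν) (L^2/h) = 0 := by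
  have hb : 0 < 1 + ν := by linarith
  have T := kw_sol (L := L) (lam := lam) hν hh
  constructor
  · rintro ⟨w, H⟩
    have S := sol_of_eig hL H
    obtain ⟨-, ⟨x, hx, hne⟩, hwL, -⟩ := H
    have hwL0 : w L = 0 := by
      rcases mul_eq_zero.1 hwL with h1 | h1
      · exact absurd h1 (Real.rpow_pos_of_pos hL _).ne'
      · exact h1
    have hW := sol_wronskian hν hh hL S T
    rw [hwL0, zero_mul, zero_sub, neg_eq_zero] at hW
    rcases mul_eq_zero.1 hW with h1 | h1
    · exact absurd (by rw [sol_unique hν hh S hwL0 h1 hx, mul_zero]) hne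
    · unfold kw at h1
      exact (mul_eq_zero.1 h1).resolve_left (Real.exp_pos _).ne'
  · intro H
    refine ⟨kw ((1+ν)/2 - lam/(4*h)) (1+ν) h, (kw_contDiff hb).contDiffOn, ?_, ?_, fun x hx => (eq_iff T.d1 T.d2 hx).2 (T.eq x hx)⟩
    · have hc : ContinuousAt (kw ((1+ν)/2 - lam/(4*h)) (1+ν) h) 0 := (kw_d hb 0).continuousAt
      have h0 : kw ((1+ν)/2 - lam/(4*h)) (1+ν) h 0 ≠ 0 := by simp [kw, KM_zero]
      have h1 := (hc.eventually_ne h0).filter_mono (nhdsWithin_le_nhds (s := Ioi 0))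
      obtain ⟨x, hx1, hx2⟩ := (h1.and (Ioc_mem_nhdsGT hL)).exists
      exact ⟨x, hx2, mul_ne_zero (Real.rpow_pos_of_pos hx2.1 _).ne' hx1⟩
    · simp [kw, H]

lemma kc_one {b : ℝ} (n : ℕ) : kc 1 b n = 1 / poch b n := by
  unfold kc; rw [poch_one]
  have : (n.factorial : ℝ) ≠ 0 := by positivity
  rw [mul_comm]; field_simp

lemma H_ode {ν : ℝ} (hν : 0 < ν) (z : ℝ) :
    z * KM1 1 (1+ν) z + ν * KM 1 (1+ν) z = ν + z * KM 1 (1+ν) z := by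
  have hb : 0 < 1 + ν := by linarith
  have h0 := (ent_kc 1 hb).summable z
  have h1 := (ent_kc 1 hb).deriv.summable z
  have e1 : KM 1 (1+ν) z = 1 + ∑' n : ℕ, kc 1 (1+ν) (n+1) * z^(n+1) := by
    unfold KM psum
    rw [h0.tsum_eq_zero_add]; simp [kc_one, poch_zero]
  have e2 : ν * ∑' n : ℕ, kc 1 (1+ν) (n+1) * z^(n+1) = ∑' n : ℕ, ν * (kc 1 (1+ν) (n+1) * z^(n+1)) := tsum_mul_left.symm
  have e3 : z * KM1 1 (1+ν) z = ∑' n : ℕ, z * ((n+1) * kc 1 (1+ν) (n+1) * z^n) := tsum_mul_left.symm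
  have e4 : z * KM 1 (1+ν) z = ∑' n : ℕ, z * (kc 1 (1+ν) n * z^n) := tsum_mul_left.symm
  have h0' := (summable_nat_add_iff 1).2 h0
  have e5 : z * KM1 1 (1+ν) z + ν * ∑' n : ℕ, kc 1 (1+ν) (n+1) * z^(n+1) = z * KM 1 (1+ν) z := by
    rw [e2, e3, e4, ← (h1.mul_left z).tsum_add (h0'.mul_left ν)]
    apply tsum_congr; intro n
    have hp := poch_pos hb n
    have : (0:ℝ) < 1 + ν + n := by positivity
    rw [kc_one, kc_one, poch_succ]
    field_simp
    ring
  have e6 : ν * KM 1 (1+ν) z = ν + ν * ∑' n : ℕ, kc 1 (1+ν) (n+1) * z^(n+1) := by rw [e1]; ring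
  rw [e6]; linarith

lemma H_integral {ν z : ℝ} (hν : 0 < ν) (hz : 0 < z) :
    z^ν * Real.exp (-z) * KM 1 (1+ν) z = ∫ x in (0:ℝ)..z, ν * (Real.exp (-x) * x^(ν-1)) := by
  have hb : 0 < 1 + ν := by linarith
  have hc : Continuous (KM 1 (1+ν)) := continuous_iff_continuousAt.2 fun z => (KM_hasDerivAt 1 hb z).continuousAt
  have hr : Continuous (fun z : ℝ => z^ν) := Real.continuous_rpow_const hν.le
  rw [intervalIntegral.integral_eq_sub_of_hasDerivAt_of_le (f := fun z => z^ν * Real.exp (-z) * KM 1 (1+ν) z) hz.le]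
  · simp [Real.zero_rpow hν.ne']
  · exact ((hr.mul (by fun_prop)).mul hc).continuousOn
  · intro x hx
    have hx0 : x ≠ 0 := hx.1.ne'
    have := ((Real.hasDerivAt_rpow_const (x := x) (p := ν) (Or.inl hx0)).mul ((hasDerivAt_neg x).exp)).mul (KM_hasDerivAt 1 hb x)
    refine this.congr_deriv ?_
    have ho := H_ode hν x
    simp only [Pi.mul_apply]
    rw [Real.rpow_sub_one hx0]
    field_simp
    linear_combination x^ν * ho
  · apply IntervalIntegrable.const_mul
    rw [intervalIntegrable_iff_integrableOn_Ioc_of_le hz.le]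
    exact (Real.GammaIntegral_convergent hν).mono_set Ioc_subset_Ioi_self

lemma H_bounds {ν z : ℝ} (hν : 0 < ν) (hz : 0 < z) :
    Real.Gamma (1+ν) * (1 - ν/z) ≤ z^ν * Real.exp (-z) * KM 1 (1+ν) z ∧
    z^ν * Real.exp (-z) * KM 1 (1+ν) z ≤ Real.Gamma (1+ν) := by
  have hG : Real.Gamma (1+ν) = ν * Real.Gamma ν := by rw [add_comm, Real.Gamma_add_one hν.ne']
  have hi := Real.GammaIntegral_convergent hν
  have hi1 := Real.GammaIntegral_convergent (s := ν+1) (by linarith)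
  have hs : ∫ x in Ioi (0:ℝ), Real.exp (-x) * x^(ν-1) = (∫ x in (0:ℝ)..z, Real.exp (-x) * x^(ν-1)) + ∫ x in Ioi z, Real.exp (-x) * x^(ν-1) := by
    rw [intervalIntegral.integral_of_le hz.le, ← setIntegral_union (Ioc_disjoint_Ioi le_rfl) measurableSet_Ioi
      (hi.mono_set Ioc_subset_Ioi_self) (hi.mono_set (Ioi_subset_Ioi hz.le)), Ioc_union_Ioi_eq_Ioi hz.le]
  rw [H_integral hν hz, intervalIntegral.integral_const_mul]
  rw [← Real.Gamma_eq_integral hν] at hs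
  have ht0 : 0 ≤ ∫ x in Ioi z, Real.exp (-x) * x^(ν-1) := by
    apply setIntegral_nonneg measurableSet_Ioi
    intro x hx
    have : 0 < x := hz.trans hx
    positivity
  have ht1 : ∫ x in Ioi z, Real.exp (-x) * x^(ν-1) ≤ Real.Gamma (1+ν) / z := by
    calc ∫ x in Ioi z, Real.exp (-x) * x^(ν-1) ≤ ∫ x in Ioi z, (1/z) * (Real.exp (-x) * x^(ν+1-1)) := by
          apply setIntegral_mono_on (hi.mono_set (Ioi_subset_Ioi hz.le)) ((hi1.mono_set (Ioi_subset_Ioi hz.le)).const_mul _) measurableSet_Ioi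
          intro x hx
          have hx0 : 0 < x := hz.trans hx
          have hzx : z ≤ x := le_of_lt hx
          rw [Real.rpow_sub_one hx0.ne', add_sub_cancel_right]
          rw [show Real.exp (-x) * (x^ν/x) = (1/x) * (Real.exp (-x) * x^ν) by ring]
          gcongr
      _ = (1/z) * ∫ x in Ioi z, (Real.exp (-x) * x^(ν+1-1)) := by rw [integral_const_mul]
      _ ≤ (1/z) * ∫ x in Ioi 0, (Real.exp (-x) * x^(ν+1-1)) := by
          apply mul_le_mul_of_nonneg_left _ (by positivity)
          apply setIntegral_mono_set hi1
          · filter_upwards [ae_restrict_mem measurableSet_Ioi] with x hx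
            have : (0:ℝ) < x := hx
            simp only [Pi.zero_apply]
            positivity
          · exact (Ioi_subset_Ioi hz.le).eventuallyLE
      _ = _ := by rw [← Real.Gamma_eq_integral (by linarith), add_comm ν 1]; ring
  constructor
  · have : ν * ∫ x in Ioi z, Real.exp (-x) * x^(ν-1) ≤ ν * (Real.Gamma (1+ν) / z) := by gcongr
    have e : Real.Gamma (1+ν) * (1 - ν/z) = Real.Gamma (1+ν) - ν * (Real.Gamma (1+ν) / z) := by ring
    rw [e]
    have : Real.Gamma (1+ν) = ν * (∫ x in (0:ℝ)..z, Real.exp (-x) * x^(ν-1)) + ν * ∫ x in Ioi z, Real.exp (-x) * x^(ν-1) := by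
      rw [hG, hs]; ring
    linarith
  · rw [hG, hs]; nlinarith

lemma core_z {A B : ℝ → ℝ} {a β Lb κ a0 b0 θ : ℝ} (hβ : 0 < β) (ha : 0 ≤ a) (hLb : 0 ≤ Lb)
    (h1 : ∀ e ∈ Icc (-(1/2):ℝ) (1/2), |A e| ≤ a)
    (h2 : ∀ e ∈ Icc (-(1/2):ℝ) (1/2), ∀ f ∈ Icc (-(1/2):ℝ) (1/2), |A e - A f| ≤ a * |e - f|)
    (h3 : ∀ e ∈ Icc (-(1/2):ℝ) (1/2), β ≤ B e)
    (h4 : ∀ e ∈ Icc (-(1/2):ℝ) (1/2), ∀ f ∈ Icc (-(1/2):ℝ) (1/2), |B e - B f| ≤ Lb * |e - f|)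
    (hκ : a/β + a*Lb/β^2 ≤ κ) (hκ4 : κ ≤ 1/4)
    (ha0 : 0 < a0) (hb0 : 0 < b0) (hθ2 : θ ≤ 1/2)
    (hA0 : |A 0 - a0| ≤ θ * a0) (hB0 : |B 0 - b0| ≤ θ * b0) :
    ∃ e ∈ Ioo (-(1/2):ℝ) (1/2), e * B e = A e ∧
      (∀ f ∈ Icc (-(1/2):ℝ) (1/2), f * B f = A f → f = e) ∧
      |e - a0/b0| ≤ (4*θ + 8*κ) * (a0/b0) := by
  have hab0 : 0 ≤ a/β := by positivity
  have hab1 : 0 ≤ a*Lb/β^2 := by positivity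
  have hθ0 : 0 ≤ θ := by
    by_contra h
    push Not at h
    have := (abs_nonneg _).trans hA0
    nlinarith
  have lip : ∀ e ∈ Icc (-(1/2):ℝ) (1/2), ∀ f ∈ Icc (-(1/2):ℝ) (1/2), |A e / B e - A f / B f| ≤ κ * |e - f| := by
    intro e he f hf
    have hBe := hβ.trans_le (h3 e he)
    have hBf := hβ.trans_le (h3 f hf)
    have : A e / B e - A f / B f = (A e - A f) / B e + A f * (B f - B e) / (B e * B f) := by
      field_simp; ring
    rw [this]
    calc _ ≤ |(A e - A f) / B e| + |A f * (B f - B e) / (B e * B f)| := abs_add_le _ _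
      _ = |A e - A f| / B e + |A f| * |B f - B e| / (B e * B f) := by
          rw [abs_div, abs_div, abs_mul, abs_of_pos hBe, abs_of_pos (mul_pos hBe hBf)]
      _ ≤ (a * |e - f|) / β + a * (Lb * |e-f|) / (β*β) := by
          have q1 := h3 e he
          have q2 := h3 f hf
          have q3 := h2 e he f hf
          have q4 := h4 f hf e he
          rw [abs_sub_comm f e] at q4
          have q5 := h1 f hf
          gcongr
      _ = (a/β + a*Lb/β^2) * |e-f| := by ring
      _ ≤ _ := by gcongr
  have bd : ∀ e ∈ Icc (-(1/2):ℝ) (1/2), e * B e = A e → e = A e / B e := by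
    intro e he h
    have hBe := hβ.trans_le (h3 e he)
    rw [← h]; field_simp
  have m0 : (0:ℝ) ∈ Icc (-(1/2):ℝ) (1/2) := by constructor <;> norm_num
  have a14 : a < β / 2 := by
    have : a/β ≤ 1/4 := by linarith
    rw [div_le_iff₀ hβ] at this; linarith
  have hAc : ContinuousOn A (Icc (-(1/2):ℝ) (1/2)) :=
    (LipschitzOnWith.of_dist_le_mul (K := ⟨a, ha⟩) fun e he f hf => by rw [Real.dist_eq, Real.dist_eq]; exact h2 e he f hf).continuousOn
  have hBc : ContinuousOn B (Icc (-(1/2):ℝ) (1/2)) :=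
    (LipschitzOnWith.of_dist_le_mul (K := ⟨Lb, hLb⟩) fun e he f hf => by rw [Real.dist_eq, Real.dist_eq]; exact h4 e he f hf).continuousOn
  have hgc : ContinuousOn (fun e => e * B e - A e) (Icc (-(1/2):ℝ) (1/2)) := (continuousOn_id.mul hBc).sub hAc
  have hm : (-(1/2):ℝ) ∈ Icc (-(1/2):ℝ) (1/2) := by constructor <;> norm_num
  have hpl : (1/2:ℝ) ∈ Icc (-(1/2):ℝ) (1/2) := by constructor <;> norm_num
  obtain ⟨e, he, hge⟩ := intermediate_value_Icc (by norm_num : (-(1/2):ℝ) ≤ 1/2) hgc (show (0:ℝ) ∈ Icc _ _ by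
    constructor
    · have := h3 _ hm
      have := (abs_le.1 (h1 _ hm)).1
      linarith
    · have := h3 _ hpl
      have := (abs_le.1 (h1 _ hpl)).2
      linarith)
  have hge' : e * B e = A e := by simpa [sub_eq_zero] using hge
  have hee := bd e he hge'
  have hBe := hβ.trans_le (h3 e he)
  have hsmall : |e| < 1/2 := by
    rw [hee, abs_div, abs_of_pos hBe, div_lt_iff₀ hBe]
    have := h1 e he
    have := h3 e he
    linarith
  refine ⟨e, ⟨(abs_lt.1 hsmall).1, (abs_lt.1 hsmall).2⟩, hge', ?_, ?_⟩
  · intro f hf hfe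
    have hff := bd f hf hfe
    have := lip f hf e he
    rw [← hff, ← hee] at this
    have h0 := abs_nonneg (f - e)
    have : |f - e| = 0 := by nlinarith
    exact sub_eq_zero.1 (abs_eq_zero.1 this)
  · have hB0p := hβ.trans_le (h3 0 m0)
    set q := A 0 / B 0 with hq
    have l1 : |e - q| ≤ κ * |e| := by
      have := lip e he 0 m0
      rwa [← hee, sub_zero] at this
    set t := a0 / b0 with ht
    have htp : 0 < t := by positivity
    have hB0l : b0 / 2 ≤ B 0 := by
      have := (abs_le.1 hB0).1
      nlinarith
    have l2 : |q - t| ≤ 4 * θ * t := by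
      have : q - t = ((A 0 - a0) * b0 - a0 * (B 0 - b0)) / (B 0 * b0) := by
        rw [hq, ht]; field_simp; ring
      rw [this, abs_div, abs_of_pos (mul_pos hB0p hb0), div_le_iff₀ (mul_pos hB0p hb0)]
      calc _ ≤ |(A 0 - a0) * b0| + |a0 * (B 0 - b0)| := abs_sub _ _
        _ = |A 0 - a0| * b0 + a0 * |B 0 - b0| := by rw [abs_mul, abs_mul, abs_of_pos ha0, abs_of_pos hb0]
        _ ≤ (θ * a0) * b0 + a0 * (θ * b0) := by gcongr
        _ = 4 * θ * t * ((b0/2) * b0) := by rw [ht]; field_simp; ring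
        _ ≤ _ := by gcongr
    have l3 : |q| ≤ 3 * t := by
      have : |q| ≤ |q - t| + |t| := by
        calc |q| = |(q - t) + t| := by ring_nf
          _ ≤ _ := abs_add_le _ _
      rw [abs_of_pos htp] at this
      nlinarith
    have l4 : |e| ≤ |e - q| + |q| := by
      calc |e| = |(e - q) + q| := by ring_nf
        _ ≤ _ := abs_add_le _ _
    have hκ0 : 0 ≤ κ := by linarith
    have l5 : |e| ≤ 4 * t := by nlinarith [abs_nonneg e]
    calc |e - t| = |(e - q) + (q - t)| := by ring_nf
      _ ≤ |e - q| + |q - t| := abs_add_le _ _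
      _ ≤ κ * (4 * t) + 4 * θ * t := by
          have : κ * |e| ≤ κ * (4*t) := by gcongr
          linarith
      _ ≤ _ := by nlinarith [mul_nonneg hκ0 htp.le]

noncomputable def gt (k : ℕ) (b e z : ℝ) (j : ℕ) : ℝ :=
  poch (1-e) j / (poch b (j+(k+1)) * (j+(k+1)).factorial) * z^(j+(k+1))
noncomputable def GG (k : ℕ) (b e z : ℝ) : ℝ := ∑' j, gt k b e z j
noncomputable def AA (k : ℕ) (b z e : ℝ) : ℝ := (-1)^k * ∑ l ∈ Finset.range (k+1), kc (-(k+e)) b l * z^l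
noncomputable def BB (k : ℕ) (b z e : ℝ) : ℝ := poch (1+e) k * GG k b e z

lemma KM_decomp (k : ℕ) {b : ℝ} (hb : 0 < b) (z e : ℝ) :
    KM (-(k+e)) b z = (-1)^k * (AA k b z e - e * BB k b z e) := by
  have h0 := (ent_kc (-(k+e)) hb).summable z
  unfold KM psum
  rw [← h0.sum_add_tsum_nat_add (k+1), AA, BB, GG]
  have e1 : ∑' j, kc (-(k+e)) b (j+(k+1)) * z^(j+(k+1)) = -((-1)^k * (e * poch (1+e) k)) * ∑' j, gt k b e z j := by
    rw [← tsum_mul_left]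
    apply tsum_congr; intro j
    rw [← poch_neg_succ, kc, gt, show j + (k+1) = (k+1) + j by ring, poch_add (-(k+e)),
      show -((k:ℝ)+e) + ((k+1 : ℕ):ℝ) = 1 - e by push_cast; ring]
    ring
  rw [e1]
  have : ((-1:ℝ)^k)*(-1)^k = 1 := by rw [← mul_pow]; norm_num
  linear_combination (-(∑ l ∈ Finset.range (k+1), kc (-(k+e)) b l * z^l)) * this

lemma zero_iff (k : ℕ) {b : ℝ} (hb : 0 < b) (z e : ℝ) :
    KM (-(k+e)) b z = 0 ↔ e * BB k b z e = AA k b z e := by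
  rw [KM_decomp k hb]
  have : ((-1:ℝ)^k) ≠ 0 := pow_ne_zero _ (by norm_num)
  rw [mul_eq_zero_iff_left this, sub_eq_zero, eq_comm]

lemma poch_two (j : ℕ) : poch 2 j = (j+1).factorial := by
  rw [← poch_one, poch_succ']; norm_num

lemma poch_le_of {x : ℝ} (hx : x ∈ Icc (1/2:ℝ) (3/2)) (j : ℕ) : poch x j ≤ (j+1).factorial := by
  rw [← poch_two]; exact poch_mono (by linarith [hx.1]) (by linarith [hx.2]) j

lemma poch_lip {x y : ℝ} (hx : x ∈ Icc (1/2:ℝ) (3/2)) (hy : y ∈ Icc (1/2:ℝ) (3/2)) (j : ℕ) :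
    |poch x j - poch y j| ≤ |x - y| * (j * (j+1).factorial) := by
  induction j with
  | zero => simp [poch_zero]
  | succ j ih =>
    rw [poch_succ, poch_succ, show poch x j * (x+j) - poch y j * (y+j) = (poch x j - poch y j) * (x + j) + poch y j * (x - y) by ring]
    have hyp := poch_pos (by linarith [hy.1] : 0 < y) j
    have hyl := poch_le_of hy j
    have hxj : 0 < x + j := by have := hx.1; positivity
    have hx2 : x + j ≤ j + 2 := by linarith [hx.2]
    calc _ ≤ |(poch x j - poch y j) * (x + j)| + |poch y j * (x - y)| := abs_add_le _ _
      _ = |poch x j - poch y j| * (x+j) + poch y j * |x - y| := by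
        rw [abs_mul, abs_mul, abs_of_pos hxj, abs_of_pos hyp]
      _ ≤ (|x - y| * (j * (j+1).factorial)) * (j+2) + (j+1).factorial * |x-y| := by gcongr
      _ = |x - y| * ((j+1).factorial * (j*(j+2)+1)) := by ring
      _ ≤ |x - y| * ((j+1).factorial * ((j+1)*(j+2))) := by gcongr; nlinarith
      _ = _ := by rw [Nat.factorial_succ (j+1)]; push_cast; ring

lemma poch_half_ge (j : ℕ) : (j.factorial : ℝ) / (2 * (j+1)) ≤ poch (1/2) j := by
  induction j with
  | zero => simp [poch_zero]; norm_num
  | succ j ih =>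
    rw [poch_succ]
    calc _ ≤ (j.factorial : ℝ) / (2 * (j+1)) * (1/2 + j) := by
          rw [Nat.factorial_succ]; push_cast
          have : (0:ℝ) < j.factorial := by positivity
          rw [div_mul_eq_mul_div, div_le_div_iff₀ (by positivity) (by positivity)]
          have hj : (0:ℝ) ≤ j := by positivity
          have : ((j:ℝ)+1)*(2*(j+1)) ≤ (1/2+j)*(2*(j+1+1)) := by nlinarith
          calc ((j:ℝ)+1) * j.factorial * (2*(j+1)) = j.factorial * (((j:ℝ)+1)*(2*(j+1))) := by ring
            _ ≤ j.factorial * ((1/2+j)*(2*(j+1+1))) := by gcongr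
            _ = _ := by ring
      _ ≤ _ := by gcongr

lemma exp_shift (k : ℕ) {z : ℝ} (hz : 0 ≤ z) :
    Summable (fun j : ℕ => z^(j+k)/((j+k).factorial : ℝ)) ∧ ∑' j : ℕ, z^(j+k)/((j+k).factorial : ℝ) ≤ Real.exp z := by
  have h := Real.summable_pow_div_factorial z
  refine ⟨(summable_nat_add_iff k).2 h, ?_⟩
  have e : Real.exp z = ∑' n : ℕ, z^n/(n.factorial:ℝ) := by
    rw [Real.exp_eq_exp_ℝ, NormedSpace.exp_eq_tsum_div]
  rw [e, ← h.sum_add_tsum_nat_add k]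
  have : 0 ≤ ∑ i ∈ Finset.range k, z^i/(i.factorial:ℝ) := Finset.sum_nonneg fun i _ => by positivity
  linarith

lemma mem_sub {e : ℝ} (he : e ∈ Icc (-(1/2):ℝ) (1/2)) : 1 - e ∈ Icc (1/2:ℝ) (3/2) :=
  ⟨by linarith [he.2], by linarith [he.1]⟩
lemma mem_add {e : ℝ} (he : e ∈ Icc (-(1/2):ℝ) (1/2)) : 1 + e ∈ Icc (1/2:ℝ) (3/2) :=
  ⟨by linarith [he.1], by linarith [he.2]⟩

lemma gt_nonneg (k : ℕ) {b : ℝ} (hb : 1 ≤ b) {e z : ℝ} (he : e ∈ Icc (-(1/2):ℝ) (1/2)) (hz : 0 ≤ z) (j : ℕ) : 0 ≤ gt k b e z j := by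
  have := poch_pos (by linarith : 0 < b) (j+(k+1))
  have := poch_pos (by linarith [he.2] : 0 < 1 - e) j
  unfold gt; positivity
lemma gt_le (k : ℕ) {b : ℝ} (hb : 1 ≤ b) {e z : ℝ} (he : e ∈ Icc (-(1/2):ℝ) (1/2)) (hz : 0 ≤ z) (j : ℕ) :
    gt k b e z j ≤ z^(j+(k+1))/((j+(k+1)).factorial : ℝ) := by
  unfold gt
  have h1 : poch (1-e) j ≤ ((j+(k+1)).factorial : ℝ) :=
    (poch_le_of (mem_sub he) j).trans (by exact_mod_cast Nat.factorial_le (by omega))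
  have h2 := fact_le_poch hb (j+(k+1))
  have hf : (0:ℝ) < ((j+(k+1)).factorial : ℝ) := by positivity
  calc _ ≤ ((j+(k+1)).factorial : ℝ) / ((j+(k+1)).factorial * (j+(k+1)).factorial) * z^(j+(k+1)) := by gcongr
    _ = _ := by field_simp
lemma gt_summable (k : ℕ) {b : ℝ} (hb : 1 ≤ b) {e z : ℝ} (he : e ∈ Icc (-(1/2):ℝ) (1/2)) (hz : 0 ≤ z) : Summable (gt k b e z) :=
  Summable.of_nonneg_of_le (gt_nonneg k hb he hz) (gt_le k hb he hz) (exp_shift (k+1) hz).1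
lemma GG_le (k : ℕ) {b : ℝ} (hb : 1 ≤ b) {e z : ℝ} (he : e ∈ Icc (-(1/2):ℝ) (1/2)) (hz : 0 ≤ z) : GG k b e z ≤ Real.exp z :=
  ((gt_summable k hb he hz).tsum_le_tsum (gt_le k hb he hz) (exp_shift (k+1) hz).1).trans (exp_shift (k+1) hz).2
lemma GG_nonneg (k : ℕ) {b : ℝ} (hb : 1 ≤ b) {e z : ℝ} (he : e ∈ Icc (-(1/2):ℝ) (1/2)) (hz : 0 ≤ z) : 0 ≤ GG k b e z :=
  tsum_nonneg (gt_nonneg k hb he hz)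
lemma gt_lip (k : ℕ) {b : ℝ} (hb : 1 ≤ b) {e f z : ℝ} (he : e ∈ Icc (-(1/2):ℝ) (1/2)) (hf : f ∈ Icc (-(1/2):ℝ) (1/2)) (hz : 0 ≤ z) (j : ℕ) :
    |gt k b e z j - gt k b f z j| ≤ (|e - f| * z) * (z^(j+k)/((j+k).factorial : ℝ)) := by
  unfold gt
  have hl := poch_lip (mem_sub he) (mem_sub hf) j
  rw [show 1 - e - (1 - f) = -(e - f) by ring, abs_neg] at hl
  have h2 := fact_le_poch hb (j+(k+1))
  have hfp : (0:ℝ) < ((j+(k+1)).factorial : ℝ) := by positivity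
  have hpp := poch_pos (by linarith : 0 < b) (j+(k+1))
  have h1 : ((j+1).factorial : ℝ) ≤ ((j+(k+1)).factorial : ℝ) := by exact_mod_cast Nat.factorial_le (by omega)
  rw [← sub_mul, ← sub_div, abs_mul, abs_div, abs_of_pos (mul_pos hpp hfp), abs_of_nonneg (pow_nonneg hz _)]
  calc _ ≤ (|e - f| * ((j+k+1:ℝ) * (j+(k+1)).factorial)) / ((j+(k+1)).factorial * (j+(k+1)).factorial) * z^(j+(k+1)) := by
        gcongr
        refine hl.trans ?_
        gcongr
        have : (0:ℝ) ≤ k := by positivity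
        linarith
    _ = _ := by
        rw [show j + (k+1) = (j+k)+1 by ring, Nat.factorial_succ]
        push_cast
        field_simp
        ring
lemma GG_lip (k : ℕ) {b : ℝ} (hb : 1 ≤ b) {e f z : ℝ} (he : e ∈ Icc (-(1/2):ℝ) (1/2)) (hf : f ∈ Icc (-(1/2):ℝ) (1/2)) (hz : 0 ≤ z) :
    |GG k b e z - GG k b f z| ≤ (z * Real.exp z) * |e - f| := by
  have s1 := gt_summable k hb he hz
  have s2 := gt_summable k hb hf hz
  unfold GG
  rw [← s1.tsum_sub s2]
  have hs := ((exp_shift k hz).1.mul_left (|e - f| * z))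
  have := tsum_of_norm_bounded hs.hasSum (f := fun j => gt k b e z j - gt k b f z j) (fun j => gt_lip k hb he hf hz j)
  rw [Real.norm_eq_abs, tsum_mul_left] at this
  calc _ ≤ _ := this
    _ ≤ (|e - f| * z) * Real.exp z := by gcongr; exact (exp_shift k hz).2
    _ = _ := by ring

lemma poch_ratio (d : ℝ) (hd : 0 ≤ d) (r : ℕ) : ∃ C : ℝ, 0 ≤ C ∧ ∀ x : ℝ, 1 ≤ x → poch (x+d) r ≤ poch x r * (1 + C/x) := by
  induction r with
  | zero => exact ⟨0, le_rfl, fun x _ => by simp [poch_zero]⟩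
  | succ r ih =>
    obtain ⟨C, hC, h⟩ := ih
    refine ⟨C + d + C*d, by positivity, fun x hx => ?_⟩
    have hx0 : 0 < x := by linarith
    rw [poch_succ, poch_succ]
    have hp := poch_pos hx0 r
    have h1 : x + d + r ≤ (x+r) * (1 + d/x) := by
      have : (x+r) * (1 + d/x) = x + r + d + r*d/x := by field_simp; ring
      rw [this]
      have : 0 ≤ r*d/x := by positivity
      linarith
    calc _ ≤ (poch x r * (1 + C/x)) * ((x+r) * (1+d/x)) := by
          gcongr
          exact h x hx
      _ = poch x r * (x+r) * (1 + C/x + d/x + C*d/x * (1/x)) := by ring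
      _ ≤ poch x r * (x+r) * (1 + C/x + d/x + C*d/x * 1) := by
          gcongr
          rw [div_le_one hx0]; exact hx
      _ = _ := by ring

/-- terms of the series of `KM 1 b` -/
noncomputable def hN (b z : ℝ) (n : ℕ) : ℝ := z^n / poch b n
lemma hN_summable {b : ℝ} (hb : 0 < b) (z : ℝ) : Summable (hN b z) :=
  ((ent_kc 1 hb).summable z).congr fun n => by rw [kc_one, hN]; ring
lemma hN_tsum {b : ℝ} (z : ℝ) : ∑' n, hN b z n = KM 1 b z :=
  tsum_congr fun n => by rw [kc_one, hN]; ring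
lemma hN_succ {b : ℝ} (hb : 0 < b) (z : ℝ) (n : ℕ) : hN b z (n+1) * (b + n) = z * hN b z n := by
  have := poch_pos hb n
  rw [hN, hN, poch_succ]
  have : 0 < b + n := by positivity
  field_simp
  ring
lemma hN_nonneg {b z : ℝ} (hb : 0 < b) (hz : 0 ≤ z) (n : ℕ) : 0 ≤ hN b z n := by
  have := poch_pos hb n
  unfold hN; positivity
lemma hN_tail {b : ℝ} (hb : 0 < b) (z : ℝ) (r : ℕ) :
    ∑' j, hN b z (j + r) = KM 1 b z - ∑ i ∈ Finset.range r, hN b z i := by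
  rw [← hN_tsum, ← (hN_summable hb z).sum_add_tsum_nat_add r]; ring
lemma hN_tail_le {b z : ℝ} (hb : 0 < b) (hz : 0 ≤ z) (r : ℕ) :
    ∑' j, hN b z (j + r) ≤ KM 1 b z := by
  rw [hN_tail hb]
  have := Finset.sum_nonneg (s := Finset.range r) fun i _ => hN_nonneg hb hz i
  linarith
lemma hN_poly {b z : ℝ} (hb : 1 ≤ b) (hz : 1 ≤ z) (r : ℕ) : ∑ i ∈ Finset.range r, hN b z i ≤ r * z^r := by
  calc _ ≤ ∑ i ∈ Finset.range r, z^r := by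
        apply Finset.sum_le_sum
        intro i hi
        have h1 : (1:ℝ) ≤ poch b i := le_trans (by exact_mod_cast Nat.factorial_pos i) (fact_le_poch hb i)
        rw [hN]
        calc z^i / poch b i ≤ z^i / 1 := by gcongr
          _ = z^i := by simp
          _ ≤ z^r := pow_le_pow_right₀ hz (Finset.mem_range.1 hi).le
    _ = _ := by simp

lemma gt_zero_eq (k : ℕ) {b : ℝ} (hb : 1 ≤ b) (z : ℝ) (j : ℕ) :
    gt k b 0 z j * z^(k+1) * poch (1+j) (k+1) = hN b z (j+(2*k+2)) * poch (b + (j+(k+1):ℕ)) (k+1) := by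
  unfold gt hN
  have hb0 : 0 < b := by linarith
  rw [show j + (2*k+2) = (j+(k+1)) + (k+1) by ring, poch_add b (j+(k+1)) (k+1), sub_zero, ← poch_one (j+(k+1)), poch_add 1 j]
  have h1 := poch_pos hb0 (j+(k+1))
  have h2 := poch_pos (by positivity : 0 < b + (j+(k+1):ℕ)) (k+1)
  have h3 := poch_pos (by positivity : 0 < (1:ℝ) + j) (k+1)
  have h4 := poch_pos one_pos j
  rw [pow_add z (j+(k+1))]
  field_simp

lemma gt_zero_ge (k : ℕ) {b z : ℝ} (hb : 1 ≤ b) (hz : 0 ≤ z) (j : ℕ) :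
    hN b z (j+(2*k+2)) ≤ gt k b 0 z j * z^(k+1) := by
  have h3 := poch_pos (by positivity : 0 < (1:ℝ) + j) (k+1)
  have := gt_zero_eq k hb z j
  apply le_of_mul_le_mul_right _ h3
  rw [this]
  apply mul_le_mul_of_nonneg_left _ (hN_nonneg (by linarith) hz _)
  apply poch_mono (by positivity)
  push_cast
  have : (0:ℝ) ≤ k := by positivity
  linarith

lemma gt_zero_le (k : ℕ) {b : ℝ} (hb : 1 ≤ b) : ∃ C : ℝ, 0 ≤ C ∧ ∀ z : ℝ, 0 ≤ z → ∀ j,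
    gt k b 0 z j * z^(k+1) * z ≤ z * hN b z (j+(2*k+2)) + C * hN b z (j+(2*k+3)) := by
  obtain ⟨C, hC, h⟩ := poch_ratio (b+k) (by positivity) (k+1)
  refine ⟨C * (b+2*k+2), by positivity, fun z hz j => ?_⟩
  have hb0 : 0 < b := by linarith
  have h3 := poch_pos (by positivity : 0 < (1:ℝ) + j) (k+1)
  have e1 := gt_zero_eq k hb z j
  have h4 := h (1+j) (by simp)
  rw [show (1:ℝ)+j+(b+k) = b + (j+(k+1):ℕ) by push_cast; ring] at h4
  have hn0 := hN_nonneg hb0 hz (j+(2*k+2))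
  have h5 : gt k b 0 z j * z^(k+1) ≤ hN b z (j+(2*k+2)) * (1 + C/(1+j)) := by
    apply le_of_mul_le_mul_right _ h3
    rw [e1, mul_assoc, mul_comm (1 + C/(1+(j:ℝ)))]
    gcongr
  have hs := hN_succ hb0 z (j+(2*k+2))
  have hn1 := hN_nonneg hb0 hz (j+(2*k+3))
  rw [show j+(2*k+2)+1 = j+(2*k+3) by ring] at hs
  have hj : (0:ℝ) ≤ j := by positivity
  have hk : (0:ℝ) ≤ k := by positivity
  calc _ ≤ hN b z (j+(2*k+2)) * (1 + C/(1+j)) * z := by gcongr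
    _ = z * hN b z (j+(2*k+2)) + C/(1+j) * (z * hN b z (j+(2*k+2))) := by ring
    _ = z * hN b z (j+(2*k+2)) + C * hN b z (j+(2*k+3)) * ((b + (j+(2*k+2):ℕ))/(1+j)) := by
        rw [← hs]; ring
    _ ≤ z * hN b z (j+(2*k+2)) + C * hN b z (j+(2*k+3)) * (b+2*k+2) := by
        gcongr
        rw [div_le_iff₀ (by positivity)]
        push_cast
        nlinarith [mul_nonneg hj hb0.le, mul_nonneg hj hk]
    _ = _ := by ring

lemma mem_zero : (0:ℝ) ∈ Icc (-(1/2):ℝ) (1/2) := by constructor <;> norm_num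

lemma GG0_ge (k : ℕ) {b z : ℝ} (hb : 1 ≤ b) (hz : 0 ≤ z) :
    KM 1 b z - ∑ i ∈ Finset.range (2*k+2), hN b z i ≤ GG k b 0 z * z^(k+1) := by
  have hb0 : 0 < b := by linarith
  rw [← hN_tail hb0, GG, ← tsum_mul_right]
  exact ((summable_nat_add_iff _).2 (hN_summable hb0 z)).tsum_le_tsum (gt_zero_ge k hb hz) ((gt_summable k hb mem_zero hz).mul_right _)

lemma GG0_le (k : ℕ) {b : ℝ} (hb : 1 ≤ b) : ∃ C : ℝ, 0 ≤ C ∧ ∀ z : ℝ, 0 < z →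
    GG k b 0 z * z^(k+1) ≤ KM 1 b z * (1 + C/z) := by
  obtain ⟨C, hC, h⟩ := gt_zero_le k hb
  refine ⟨C, hC, fun z hz => ?_⟩
  have hb0 : 0 < b := by linarith
  have s1 := ((summable_nat_add_iff (2*k+2)).2 (hN_summable hb0 z)).mul_left z
  have s2 := ((summable_nat_add_iff (2*k+3)).2 (hN_summable hb0 z)).mul_left C
  have := (((gt_summable k hb mem_zero hz.le).mul_right (z^(k+1))).mul_right z).tsum_le_tsum (h z hz.le) (s1.add s2)
  rw [tsum_mul_right, tsum_mul_right, s1.tsum_add s2, tsum_mul_left, tsum_mul_left] at this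
  apply le_of_mul_le_mul_right _ hz
  calc _ ≤ _ := this
    _ ≤ z * KM 1 b z + C * KM 1 b z := by
      have := hN_tail_le hb0 hz.le (2*k+2)
      have := hN_tail_le hb0 hz.le (2*k+3)
      gcongr
    _ = _ := by field_simp

lemma GG_ge (k : ℕ) {b z e : ℝ} (hb : 1 ≤ b) (hz : 0 ≤ z) (he : e ∈ Icc (-(1/2):ℝ) (1/2)) :
    1/2 * (KM 1 b z - ∑ i ∈ Finset.range (2*k+3), hN b z i) ≤ GG k b e z * z^(k+2) := by
  have hb0 : 0 < b := by linarith
  rw [← hN_tail hb0, GG, ← tsum_mul_right, ← tsum_mul_left]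
  refine (((summable_nat_add_iff _).2 (hN_summable hb0 z)).mul_left _).tsum_le_tsum ?_ ((gt_summable k hb he hz).mul_right _)
  intro j
  have h1 := gt_zero_ge k hb hz j
  have h2 : gt k b 0 z j / (2*(j+1)) ≤ gt k b e z j := by
    unfold gt
    have := poch_pos hb0 (j+(k+1))
    have h3 : (j.factorial : ℝ) / (2 * (j+1)) ≤ poch (1-e) j := (poch_half_ge j).trans (poch_mono (by norm_num) (mem_sub he).1 j)
    rw [sub_zero, poch_one]
    calc _ = (j.factorial : ℝ) / (2 * (j+1)) / (poch b (j+(k+1)) * (j+(k+1)).factorial) * z^(j+(k+1)) := by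
          field_simp
      _ ≤ _ := by gcongr
  have hs := hN_succ hb0 z (j+(2*k+2))
  have hn1 := hN_nonneg hb0 hz (j+(2*k+3))
  rw [show j+(2*k+2)+1 = j+(2*k+3) by ring] at hs
  have hj : (0:ℝ) ≤ j := by positivity
  have hk : (0:ℝ) ≤ k := by positivity
  calc 1/2 * hN b z (j+(2*k+3)) = (hN b z (j+(2*k+3)) * (j+1)) / (2*(j+1)) := by field_simp
    _ ≤ (hN b z (j+(2*k+3)) * (b+(j+(2*k+2):ℕ))) / (2*(j+1)) := by
        apply div_le_div_of_nonneg_right _ (by positivity)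
        apply mul_le_mul_of_nonneg_left _ hn1
        push_cast; linarith
    _ = (z * hN b z (j+(2*k+2))) / (2*(j+1)) := by rw [hs]
    _ ≤ (z * (gt k b 0 z j * z^(k+1))) / (2*(j+1)) := by gcongr
    _ = (gt k b 0 z j / (2*(j+1))) * z^(k+2) := by ring
    _ ≤ _ := by gcongr

lemma ev_small (c : ℝ) (N : ℕ) (q : ℝ) : ∀ᶠ z : ℝ in atTop, c * z^N * (z^q * Real.exp (-z)) ≤ 1 := by
  have h := (tendsto_rpow_mul_exp_neg_mul_atTop_nhds_zero (N + q) 1 one_pos).const_mul c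
  rw [mul_zero] at h
  filter_upwards [h.eventually_le_const one_pos, eventually_gt_atTop 0] with z hz hz0
  rw [Real.rpow_add hz0, Real.rpow_natCast, neg_one_mul] at hz
  calc _ = _ := by ring
    _ ≤ 1 := hz

lemma lipI {f : ℝ → ℝ} (hf : ContDiff ℝ 1 f) : ∃ C : ℝ, 0 ≤ C ∧
    (∀ x ∈ Icc (-(1/2):ℝ) (1/2), |f x| ≤ C) ∧
    ∀ x ∈ Icc (-(1/2):ℝ) (1/2), ∀ y ∈ Icc (-(1/2):ℝ) (1/2), |f x - f y| ≤ C * |x - y| := by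
  obtain ⟨C1, h1⟩ := isCompact_Icc.exists_bound_of_continuousOn (s := Icc (-(1/2):ℝ) (1/2)) hf.continuous.continuousOn
  obtain ⟨C2, h2⟩ := isCompact_Icc.exists_bound_of_continuousOn (s := Icc (-(1/2):ℝ) (1/2)) (hf.continuous_deriv le_rfl).continuousOn
  refine ⟨max C1 C2, ?_, fun x hx => (h1 x hx).trans (le_max_left _ _), fun x hx y hy => ?_⟩
  · exact ((norm_nonneg _).trans (h1 0 mem_zero)).trans (le_max_left _ _)
  · have := (convex_Icc (-(1/2):ℝ) (1/2)).norm_image_sub_le_of_norm_deriv_le (f := f)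
      (fun z _ => (hf.differentiable (by norm_num)) z) h2 hy hx
    refine this.trans ?_
    rw [Real.norm_eq_abs]
    gcongr
    exact le_max_right _ _

lemma AA_est (k : ℕ) {b : ℝ} (hb : 1 ≤ b) : ∃ C : ℝ, 0 ≤ C ∧ ∀ z : ℝ, 1 ≤ z →
    (∀ e ∈ Icc (-(1/2):ℝ) (1/2), |AA k b z e| ≤ C * z^k) ∧
    (∀ e ∈ Icc (-(1/2):ℝ) (1/2), ∀ f ∈ Icc (-(1/2):ℝ) (1/2), |AA k b z e - AA k b z f| ≤ C * z^k * |e - f|) ∧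
    |AA k b z 0 - z^k / poch b k| ≤ C * z^k / z := by
  have hl : ∀ l : ℕ, ∃ C : ℝ, 0 ≤ C ∧
    (∀ x ∈ Icc (-(1/2):ℝ) (1/2), |kc (-(k+x)) b l| ≤ C) ∧
    ∀ x ∈ Icc (-(1/2):ℝ) (1/2), ∀ y ∈ Icc (-(1/2):ℝ) (1/2), |kc (-(k+x)) b l - kc (-(k+y)) b l| ≤ C * |x - y| := by
    intro l
    apply lipI (f := fun x => kc (-(k+x)) b l)
    unfold kc
    apply ContDiff.div_const
    exact (contDiff_poch l).comp (by fun_prop : ContDiff ℝ 1 fun x : ℝ => -((k:ℝ)+x))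
  choose C hC h1 h2 using hl
  have habs : |((-1:ℝ))^k| = 1 := by simp
  refine ⟨∑ l ∈ Finset.range (k+1), C l, Finset.sum_nonneg fun l _ => hC l, fun z hz => ⟨?_, ?_, ?_⟩⟩
  · intro e he
    rw [AA, abs_mul, habs, one_mul, Finset.sum_mul]
    refine (Finset.abs_sum_le_sum_abs _ _).trans (Finset.sum_le_sum fun l hl => ?_)
    rw [abs_mul, abs_of_nonneg (by positivity : 0 ≤ z^l)]
    have := h1 l e he
    have := hC l
    have : z^l ≤ z^k := pow_le_pow_right₀ hz (by have := Finset.mem_range.1 hl; omega)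
    gcongr
  · intro e he f hf
    rw [AA, AA, ← mul_sub, abs_mul, habs, one_mul, ← Finset.sum_sub_distrib, Finset.sum_mul, Finset.sum_mul]
    refine (Finset.abs_sum_le_sum_abs _ _).trans (Finset.sum_le_sum fun l hl => ?_)
    rw [← sub_mul, abs_mul, abs_of_nonneg (by positivity : 0 ≤ z^l)]
    have := h2 l e he f hf
    have := hC l
    have : z^l ≤ z^k := pow_le_pow_right₀ hz (by have := Finset.mem_range.1 hl; omega)
    calc _ ≤ (C l * |e - f|) * z^k := by gcongr
      _ = _ := by ring
  · have hk : (-1:ℝ)^k * (kc (-(k+0)) b k * z^k) = z^k / poch b k := by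
      have := poch_pos (by linarith : 0 < b) k
      rw [kc, poch_neg, add_zero, poch_one]
      have h3 : ((-1:ℝ)^k)*(-1)^k = 1 := by rw [← mul_pow]; norm_num
      have : (k.factorial : ℝ) ≠ 0 := by positivity
      field_simp
      linear_combination h3
    rw [AA, Finset.sum_range_succ, mul_add, hk, add_sub_cancel_right, abs_mul, habs, one_mul]
    rw [mul_div_assoc, Finset.sum_mul, Finset.sum_range_succ]
    have h0 : 0 ≤ C k * (z^k / z) := mul_nonneg (hC k) (by positivity)
    refine le_trans ?_ (le_add_of_nonneg_right h0)
    refine (Finset.abs_sum_le_sum_abs _ _).trans (Finset.sum_le_sum fun l hl => ?_)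
    rw [abs_mul, abs_of_nonneg (by positivity : 0 ≤ z^l)]
    have := h1 l 0 mem_zero
    have := hC l
    have : z^l ≤ z^k / z := by
      rw [le_div_iff₀ (by linarith), ← pow_succ]
      exact pow_le_pow_right₀ hz (by have := Finset.mem_range.1 hl; omega)
    gcongr

lemma BB_lip (k : ℕ) {b : ℝ} (hb : 1 ≤ b) : ∃ C : ℝ, 0 ≤ C ∧ ∀ z : ℝ, 1 ≤ z →
    ∀ e ∈ Icc (-(1/2):ℝ) (1/2), ∀ f ∈ Icc (-(1/2):ℝ) (1/2),
      |BB k b z e - BB k b z f| ≤ C * (z * Real.exp z) * |e - f| := by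
  obtain ⟨C, hC, h1, h2⟩ := lipI (f := fun x => poch (1+x) k)
    ((contDiff_poch k).comp (by fun_prop : ContDiff ℝ 1 fun x : ℝ => 1 + x))
  refine ⟨2*C, by positivity, fun z hz e he f hf => ?_⟩
  have hz0 : 0 ≤ z := by linarith
  have g1 := GG_lip k hb he hf hz0
  have g2 := GG_le k hb hf hz0
  have g3 := GG_nonneg k hb hf hz0
  have p1 := h1 e he
  have p2 := h2 e he f hf
  rw [BB, BB, show poch (1+e) k * GG k b e z - poch (1+f) k * GG k b f z =
    poch (1+e) k * (GG k b e z - GG k b f z) + (poch (1+e) k - poch (1+f) k) * GG k b f z by ring]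
  calc _ ≤ |poch (1+e) k * (GG k b e z - GG k b f z)| + |(poch (1+e) k - poch (1+f) k) * GG k b f z| := abs_add_le _ _
    _ = |poch (1+e) k| * |GG k b e z - GG k b f z| + |poch (1+e) k - poch (1+f) k| * GG k b f z := by
      rw [abs_mul, abs_mul, abs_of_nonneg g3]
    _ ≤ C * ((z * Real.exp z) * |e - f|) + (C * |e - f|) * Real.exp z := by gcongr
    _ = C * |e-f| * Real.exp z * (z + 1) := by ring
    _ ≤ C * |e-f| * Real.exp z * (z + z) := by gcongr
    _ = _ := by ring

lemma poch_half_pow {x : ℝ} (hx : 1/2 ≤ x) (k : ℕ) : (1/2:ℝ)^k ≤ poch x k := by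
  unfold poch
  rw [← Finset.card_range k, ← Finset.prod_const, Finset.card_range]
  apply Finset.prod_le_prod
  · intros; norm_num
  · intro i _
    have : (0:ℝ) ≤ i := by positivity
    linarith

theorem per_k (k : ℕ) {ν : ℝ} (hν : 0 < ν) : ∃ C : ℝ, 0 < C ∧ ∀ᶠ z : ℝ in atTop,
    ∃ e ∈ Ioo (-(1/2):ℝ) (1/2), KM (-(k+e)) (1+ν) z = 0 ∧
      (∀ f ∈ Icc (-(1/2):ℝ) (1/2), KM (-(k+f)) (1+ν) z = 0 → f = e) ∧
      |e - z^(2*k+1) * z^ν * Real.exp (-z) / (k.factorial * Real.Gamma (1+k+ν))| ≤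
        C / z * (z^(2*k+1) * z^ν * Real.exp (-z) / (k.factorial * Real.Gamma (1+k+ν))) := by
  have hb : (1:ℝ) ≤ 1 + ν := by linarith
  have hb0 : (0:ℝ) < 1 + ν := by linarith
  obtain ⟨CA, hCA, hA⟩ := AA_est k hb
  obtain ⟨CB, hCB, hB⟩ := BB_lip k hb
  obtain ⟨CG, hCG, hG⟩ := GG0_le k hb
  set Γb := Real.Gamma (1+ν) with hΓ
  have hΓ0 : 0 < Γb := Real.Gamma_pos_of_pos hb0
  have hpb := poch_pos hb0 k
  set D := ν + 1 + CG + CA * poch (1+ν) k with hD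
  have hD0 : 0 < D := by positivity
  refine ⟨4*D + 8, by positivity, ?_⟩
  filter_upwards [eventually_ge_atTop 4, eventually_ge_atTop (2*D), eventually_ge_atTop (2*(ν+1)),
    ev_small (((2*k+2:ℕ):ℝ)/Γb) (2*k+3) ν, ev_small (((2*k+3:ℕ):ℝ)/Γb) (2*k+4) ν,
    ev_small (2 * (CA * 2^k * 4 / Γb)) (2*k+3) ν,
    ev_small (2 * (CA * CB * (2^k * 4 / Γb)^2)) (3*k+6) (2*ν)] with z hz4 hzD hzν s1 s2 s3 s4
  have hz : 0 < z := by linarith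
  have hz1 : 1 ≤ z := by linarith
  obtain ⟨hA1, hA2, hA3⟩ := hA z hz1
  obtain ⟨hH1, hH2⟩ := H_bounds hν hz
  set Y := z^ν * Real.exp (-z) with hY
  have hY0 : 0 < Y := by positivity
  set X := Γb / Y with hX
  have hX0 : 0 < X := by positivity
  have hΓX : Γb = X * Y := by rw [hX]; field_simp
  have hH1' : X * (1 - ν/z) ≤ KM 1 (1+ν) z := by
    apply le_of_mul_le_mul_left _ hY0
    calc _ = Γb * (1 - ν/z) := by rw [hΓX]; ring
      _ ≤ _ := hH1
  have hH2' : KM 1 (1+ν) z ≤ X := by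
    apply le_of_mul_le_mul_left _ hY0
    calc _ ≤ Γb := hH2
      _ = _ := by rw [hΓX]; ring
  have t1 : ((2*k+2:ℕ):ℝ) * z^(2*k+2) ≤ X / z := by
    rw [hX, div_div, le_div_iff₀ (by positivity)]
    rw [div_mul_eq_mul_div, div_mul_eq_mul_div, div_le_one hΓ0] at s1
    calc _ = _ := by ring
      _ ≤ _ := s1
  have t2 : ((2*k+3:ℕ):ℝ) * z^(2*k+3) ≤ X / z := by
    rw [hX, div_div, le_div_iff₀ (by positivity)]
    rw [div_mul_eq_mul_div, div_mul_eq_mul_div, div_le_one hΓ0] at s2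
    calc _ = _ := by ring
      _ ≤ _ := s2
  -- lower bound for B
  have hGe : ∀ e ∈ Icc (-(1/2):ℝ) (1/2), X / 4 / z^(k+2) ≤ GG k (1+ν) e z := by
    intro e he
    rw [div_le_iff₀ (by positivity)]
    refine le_trans ?_ (GG_ge k hb hz.le he)
    have p := hN_poly hb hz1 (2*k+3)
    have : X / z * (ν+1) ≤ X / 2 := by
      rw [div_mul_eq_mul_div, div_le_iff₀ hz]; nlinarith
    have : X * (1 - ν/z) = X - X / z * ν := by ring
    nlinarith
  have hpk : (0:ℝ) < (1/2)^k := by positivity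
  set β := (1/2:ℝ)^k * (X / 4 / z^(k+2)) with hβ
  have hβ0 : 0 < β := by positivity
  have hBe : ∀ e ∈ Icc (-(1/2):ℝ) (1/2), β ≤ BB k (1+ν) z e := by
    intro e he
    have q1 := hGe e he
    have q2 := poch_half_pow (mem_add he).1 k
    rw [hβ, BB]
    have : 0 < X / 4 / z^(k+2) := by positivity
    exact mul_le_mul q2 q1 this.le (hpk.le.trans q2)
  have hκ : (CA * z^k)/β + (CA * z^k)*(CB * (z * Real.exp z))/β^2 ≤ 1/z := by
    have h2k : (2:ℝ)^k * (1/2)^k = 1 := by rw [← mul_pow]; norm_num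
    have hi : 1 / β = (2^k * 4 / Γb) * z^(k+2) * Y := by
      rw [hβ, hΓX]
      field_simp
      linear_combination -h2k
    have hexp : Real.exp z * Real.exp (-z) = 1 := by rw [← Real.exp_add]; simp
    have e1 : (CA * z^k)/β * z = CA * 2^k * 4 / Γb * z^(2*k+3) * Y := by
      rw [div_eq_mul_one_div, hi]; ring
    have e2 : (CA * z^k)*(CB * (z * Real.exp z))/β^2 * z = CA * CB * (2^k * 4 / Γb)^2 * z^(3*k+6) * (z^(2*ν) * Real.exp (-z)) := by
      have hz2 : z^(2*ν) = z^ν * z^ν := by rw [two_mul, Real.rpow_add hz]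
      have : (CA * z^k)*(CB * (z * Real.exp z))/β^2 = (CA * z^k)*(CB * (z * Real.exp z)) * (1/β)^2 := by
        rw [div_eq_mul_one_div, one_div_pow]
      rw [this, hi, hz2, hY]
      linear_combination CA * CB * (2^k * 4 / Γb)^2 * z^(3*k+6) * (z^ν * z^ν * Real.exp (-z)) * hexp
    rw [le_div_iff₀ hz, add_mul, e1, e2]
    have s3' : 2 * (CA * 2^k * 4 / Γb * z^(2*k+3) * Y) ≤ 1 := by
      calc _ = _ := by ring
        _ ≤ 1 := s3
    have s4' : 2 * (CA * CB * (2^k * 4 / Γb)^2 * z^(3*k+6) * (z^(2*ν) * Real.exp (-z))) ≤ 1 := by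
      calc _ = _ := by ring
        _ ≤ 1 := s4
    linarith
  have hκ4 : 1/z ≤ 1/4 := by gcongr
  have hfac : (0:ℝ) < k.factorial := by positivity
  -- asymptotics at zero
  have hG0 : |GG k (1+ν) 0 z * z^(k+1) - X| ≤ (ν+1+CG)/z * X := by
    have p := hN_poly hb hz1 (2*k+2)
    have g1 := GG0_ge k hb hz.le
    have g2 := hG z hz
    have : KM 1 (1+ν) z * (1 + CG/z) ≤ X * (1+CG/z) := by gcongr
    have hXz : 0 ≤ X / z := by positivity
    rw [abs_le]
    have e1 : (ν+1+CG)/z * X = X/z * ν + X/z + X/z * CG := by ring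
    have e2 : X * (1 - ν/z) = X - X / z * ν := by ring
    have e3 : X * (1 + CG/z) = X + X / z * CG := by ring
    have e4 : 0 ≤ X / z * CG := by positivity
    have e5 : 0 ≤ X / z * ν := by positivity
    rw [e1]
    constructor <;> linarith
  have hzk : (0:ℝ) < z^(k+1) := by positivity
  obtain ⟨e, he, hz1, hz2, hz3⟩ := core_z (A := AA k (1+ν) z) (B := BB k (1+ν) z) (a := CA * z^k) (β := β)
    (Lb := CB * (z * Real.exp z)) (κ := 1/z) (a0 := z^k / poch (1+ν) k) (b0 := k.factorial * X / z^(k+1)) (θ := D/z)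
    hβ0 (by positivity) (by positivity) hA1 hA2 hBe (hB z hz1) hκ hκ4 (by positivity) (by positivity)
    (by rw [div_le_iff₀ hz]; linarith)
    (by
      refine hA3.trans ?_
      calc CA * z^k / z = (CA * poch (1+ν) k) / z * (z^k / poch (1+ν) k) := by field_simp
        _ ≤ _ := by
          gcongr
          rw [hD]; linarith)
    (by
      have : BB k (1+ν) z 0 - k.factorial * X / z^(k+1) = (k.factorial / z^(k+1)) * (GG k (1+ν) 0 z * z^(k+1) - X) := by
        rw [BB, add_zero, poch_one]; field_simp
      rw [this, abs_mul, abs_of_pos (by positivity)]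
      calc _ ≤ (k.factorial / z^(k+1)) * ((ν+1+CG)/z * X) := by gcongr
        _ ≤ (k.factorial / z^(k+1)) * (D/z * X) := by
          gcongr
          rw [hD]
          have : 0 ≤ CA * poch (1+ν) k := by positivity
          linarith
        _ = _ := by ring)
  have ht : z^k / poch (1+ν) k / (k.factorial * X / z^(k+1)) = z^(2*k+1) * z^ν * Real.exp (-z) / (k.factorial * Real.Gamma (1+k+ν)) := by
    rw [show (1:ℝ)+k+ν = (1+ν)+k by ring, Gamma_poch hb0, ← hΓ, mul_assoc (z^(2*k+1)), ← hY, hX]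
    field_simp
    ring
  rw [ht] at hz3
  refine ⟨e, he, (zero_iff k hb0 z e).2 hz1, fun f hf hf0 => hz2 f hf ((zero_iff k hb0 z f).1 hf0), ?_⟩
  calc _ ≤ _ := hz3
    _ = _ := by ring

lemma T_eq (m : ℕ) {ν h L : ℝ} (hh : 0 < h) (hL : 0 < L) :
    4 / ((Nat.factorial m : ℝ) * Real.Gamma (1 + m + ν)) *
            h ^ (-2 * (m : ℝ) - ν) * L ^ (2 * (2 * (m : ℝ) + 1 + ν)) * Real.exp (-L ^ 2 / h)
    = 4 * h * ((L^2/h)^(2*m+1) * (L^2/h)^ν * Real.exp (-(L^2/h)) /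
        (m.factorial * Real.Gamma (1+m+ν))) := by
  have h1 : L ^ (2 * (2 * (m : ℝ) + 1 + ν)) = (L^2)^(2*m+1) * (L^2)^ν := by
    rw [← Real.rpow_natCast (L^2) (2*m+1), ← Real.rpow_add (by positivity),
      ← Real.rpow_natCast L 2, ← Real.rpow_mul hL.le]
    push_cast; rfl
  have h2 : h ^ (-2 * (m : ℝ) - ν) = h / (h^(2*m+1) * h^ν) := by
    have : -2 * (m : ℝ) - ν = 1 - (((2*m+1 : ℕ) : ℝ) + ν) := by push_cast; ring
    rw [this, Real.rpow_sub hh, Real.rpow_add hh, Real.rpow_natCast, Real.rpow_one]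
  rw [h1, h2, Real.div_rpow (by positivity) hh.le, div_pow, neg_div]
  ring

/-- Abstract counting: if the elements of `S` below `m + 1/2` are localized, the
`m`-th one is `m + e m`. -/
lemma nth_loc {S : Set ℝ} {m : ℕ} {e : ℕ → ℝ}
    (hpos : ∀ s ∈ S, 0 < s)
    (he : ∀ k ≤ m, e k ∈ Ioo (-(1/2):ℝ) (1/2))
    (hS : ∀ k ≤ m, (k:ℝ) + e k ∈ S)
    (hu : ∀ k ≤ m, ∀ f ∈ Icc (-(1/2):ℝ) (1/2), (k:ℝ) + f ∈ S → f = e k)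
    {s : ℝ} (hs : IsNthEig S m s) : s = m + e m := by
  obtain ⟨hsS, hfin, hcard⟩ := hs
  have hmono : ∀ j k, k ≤ m → j < k → (j:ℝ) + e j < k + e k := by
    intro j k hk hjk
    have a := he j (by omega)
    have b := he k hk
    have : (j:ℝ) + 1 ≤ k := by exact_mod_cast hjk
    linarith [a.2, b.1]
  have hloc : ∀ t ∈ S, t < m + 1/2 → ∃ k ≤ m, t = k + e k := by
    intro t ht htm
    have h0 := hpos t ht
    have f1 := Nat.floor_le (show 0 ≤ t + 1/2 by linarith)
    have f2 := Nat.lt_floor_add_one (t + 1/2)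
    set k := ⌊t + 1/2⌋₊
    have hk : k ≤ m := by
      have : (k:ℝ) < m + 1 := by linarith
      have : k < m + 1 := by exact_mod_cast this
      omega
    refine ⟨k, hk, ?_⟩
    have := hu k hk (t - k) ⟨by linarith, by linarith⟩ (by simpa using ht)
    linarith
  rcases lt_trichotomy s (m + e m) with hlt | heq | hgt
  · exfalso
    obtain ⟨k, hk, hsk⟩ := hloc s hsS (by linarith [(he m le_rfl).2])
    have hkm : k < m := by
      rcases hk.lt_or_eq with h | h
      · exact h
      · subst h; linarith
    have hsub : {x ∈ S | x < s} ⊆ ((Finset.range k).image (fun j : ℕ => (j:ℝ) + e j) : Finset ℝ) := by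
      rintro x ⟨hx, hxs⟩
      obtain ⟨j, hj, hxj⟩ := hloc x hx (by linarith [(he m le_rfl).2])
      have hjk : j < k := by
        by_contra hc
        rcases (not_lt.1 hc).lt_or_eq with h | h
        · have := hmono k j hj h; linarith
        · subst h; linarith
      simp only [Finset.coe_image, Finset.coe_range, mem_image, mem_Iio]
      exact ⟨j, hjk, hxj.symm⟩
    have c1 := Set.ncard_le_ncard hsub (Finset.finite_toSet _)
    rw [Set.ncard_coe_finset] at c1
    have c2 := (Finset.card_image_le (s := Finset.range k) (f := fun j : ℕ => (j:ℝ) + e j))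
    rw [Finset.card_range] at c2
    omega
  · exact heq
  · exfalso
    have hsub : (((Finset.range (m+1)).image (fun j : ℕ => (j:ℝ) + e j) : Finset ℝ) : Set ℝ)
        ⊆ {x ∈ S | x < s} := by
      intro x hx
      simp only [Finset.coe_image, Finset.coe_range, mem_image, mem_Iio] at hx
      obtain ⟨j, hj, rfl⟩ := hx
      have hjm : j ≤ m := by omega
      refine ⟨hS j hjm, ?_⟩
      rcases hjm.lt_or_eq with h | h
      · exact (hmono j m le_rfl h).trans hgt
      · subst h; exact hgt
    have c1 := Set.ncard_le_ncard hsub hfin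
    rw [Set.ncard_coe_finset, Finset.card_image_of_injOn, Finset.card_range] at c1
    · omega
    · intro a ha b hb hab
      simp only [Finset.coe_range, mem_Iio] at ha hb
      simp only at hab
      rcases lt_trichotomy a b with h | h | h
      · have := hmono a b (by omega) h; linarith
      · exact h
      · have := hmono b a (by omega) h; linarith

lemma nth_affine {S : Set ℝ} {m : ℕ} {lam c d : ℝ} (hc : 0 < c) (hl : IsNthEig S m lam) :
    IsNthEig {s | c * s + d ∈ S} m ((lam - d) / c) := by
  obtain ⟨h1, h2, h3⟩ := hl
  have him : {x ∈ {s | c * s + d ∈ S} | x < (lam - d) / c}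
      = (fun x => (x - d)/c) '' {x ∈ S | x < lam} := by
    ext x
    simp only [mem_ofPred_eq, mem_image, lt_div_iff₀ hc]
    constructor
    · rintro ⟨a, b⟩
      exact ⟨c * x + d, ⟨a, by linarith⟩, by field_simp; ring⟩
    · rintro ⟨y, ⟨a, b⟩, rfl⟩
      have e1 : c * ((y - d)/c) = y - d := by field_simp
      refine ⟨by rw [e1]; simpa using a, by linarith⟩
  refine ⟨?_, ?_, ?_⟩
  · have e1 : c * ((lam - d)/c) = lam - d := by field_simp
    simp only [mem_ofPred_eq]
    rw [e1]; simpa using h1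
  · rw [him]; exact h2.image _
  · rw [him, Set.ncard_image_of_injective _ ?_, h3]
    intro x y hxy
    simp only at hxy
    rw [div_left_inj' hc.ne'] at hxy
    linarith

theorem confined_isotropic_harmonic_oscillator
    (m : ℕ) (ν : ℝ) (hν : 0 < ν)
    (lamΛ : ℝ → ℝ → ℝ)
    (hlamΛ : ∀ h L : ℝ, 0 < h → 0 < L →
      IsNthEig {lam | IsEigQD (fun x : ℝ => x ^ 2) ν L h lam} m (lamΛ h L)) :
    ∃ C δ : ℝ, 0 < C ∧ 0 < δ ∧ ∀ h L : ℝ, 0 < h → 0 < L → h / L ^ 2 < δ →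
      |lamΛ h L - 2 * (2 * m + 1 + ν) * h -
          4 / ((Nat.factorial m : ℝ) * Real.Gamma (1 + m + ν)) *
            h ^ (-2 * (m : ℝ) - ν) * L ^ (2 * (2 * (m : ℝ) + 1 + ν)) * Real.exp (-L ^ 2 / h)| ≤
        C * (h / L ^ 2) *
          (4 / ((Nat.factorial m : ℝ) * Real.Gamma (1 + m + ν)) *
            h ^ (-2 * (m : ℝ) - ν) * L ^ (2 * (2 * (m : ℝ) + 1 + ν)) * Real.exp (-L ^ 2 / h)) := by
  choose C hC hev using fun k : ℕ => per_k k hν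
  have hall := (Filter.eventually_all_finset (Finset.range (m+1))).2 (fun k _ => hev k)
  obtain ⟨Z, hZ⟩ := eventually_atTop.1 hall
  refine ⟨C m, 1 / max Z 1, hC m, by positivity, ?_⟩
  intro h L hh hL hδ
  have hz : 0 < L^2/h := by positivity
  have hzZ : Z ≤ L^2/h := by
    have : max Z 1 ≤ L^2/h := by
      have h1 : h / L^2 = 1 / (L^2/h) := by field_simp
      rw [h1, one_div_lt_one_div hz (by positivity)] at hδ
      exact hδ.le
    exact (le_max_left _ _).trans this
  have hk := hZ _ hzZ
  have hk' : ∀ k : ℕ, ∃ e : ℝ, k ≤ m → (e ∈ Ioo (-(1/2):ℝ) (1/2) ∧ KM (-(k+e)) (1+ν) (L^2/h) = 0 ∧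
      (∀ f ∈ Icc (-(1/2):ℝ) (1/2), KM (-(k+f)) (1+ν) (L^2/h) = 0 → f = e) ∧
      |e - (L^2/h)^(2*k+1) * (L^2/h)^ν * Real.exp (-(L^2/h)) / (k.factorial * Real.Gamma (1+k+ν))| ≤ C k / (L^2/h) * ((L^2/h)^(2*k+1) * (L^2/h)^ν * Real.exp (-(L^2/h)) / (k.factorial * Real.Gamma (1+k+ν)))) := by
    intro k
    by_cases hkm : k ≤ m
    · obtain ⟨e, a, b⟩ := hk k (by simp; omega)
      exact ⟨e, fun _ => ⟨a, b⟩⟩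
    · exact ⟨0, fun h => absurd h hkm⟩
  choose e hE using hk'
  have hset : ∀ s : ℝ, s ∈ {s | 4*h * s + 2*h*(1+ν) ∈ {lam | IsEigQD (fun x : ℝ => x ^ 2) ν L h lam}}
      ↔ KM (-s) (1+ν) (L^2/h) = 0 := by
    intro s
    simp only [mem_ofPred_eq]
    rw [eig_iff hν hh hL]
    have : (1+ν)/2 - (4*h * s + 2*h*(1+ν))/(4*h) = -s := by field_simp; ring
    rw [this]
  have key := nth_loc (e := e) (m := m)
    (fun s hs => by
      rw [hset] at hs
      by_contra hc
      exact absurd hs (KM_pos (by linarith) (by linarith) hz.le).ne')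
    (fun k hkm => (hE k hkm).1)
    (fun k hkm => (hset _).2 (hE k hkm).2.1)
    (fun k hkm f hf hfS => (hE k hkm).2.2.1 f hf ((hset _).1 hfS))
    (nth_affine (d := 2*h*(1+ν)) (show 0 < 4*h by linarith) (hlamΛ h L hh hL))
  rw [T_eq m hh hL]
  have hb := (hE m le_rfl).2.2.2
  set τ := (L^2/h)^(2*m+1) * (L^2/h)^ν * Real.exp (-(L^2/h)) / (m.factorial * Real.Gamma (1+m+ν))
  rw [div_eq_iff (by positivity)] at key
  have e1 : lamΛ h L - 2 * (2 * m + 1 + ν) * h - 4 * h * τ = 4 * h * (e m - τ) := by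
    linear_combination key
  have e2 : C m * (h / L^2) * (4 * h * τ) = 4 * h * (C m / (L^2/h) * τ) := by
    field_simp
  rw [e1, e2, abs_mul, abs_of_pos (by positivity : 0 < 4 * h)]
  gcongr
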